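/- arXiv:1308.4035 — 4 statements merged into one kernel-verified Lean document; each statement's English description precedes it below -/
import Mathlib

section
/- Let S be an arithmetic normed semigroup and φ : S → S a contractive semigroup endomorphism that is locally quasi periodic, i.e. for every x ∈ S there exist n ∈ ℕ and k ∈ ℕ with k > 0 such that φ^n(x) = φ^{n+k}(x). Then h_S(φ) = 0. -/
open scoped ENNReal

/-- The `n`-th trajectory (with `traj φ x n = T_{n+1}(φ,x) = x·φ(x)·…·φⁿ(x)`). -/
def traj {S : Type*} [Semigroup S] (φ : S → S) (x : S) : ℕ → S
  | 0 => x
  | n + 1 => traj φ x n * φ^[n + 1] x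

/-- The semigroup entropy of `φ` at `x`: `h_S(φ,x) = lim_n v(T_n(φ,x))/n`
(the limit exists for contractive endomorphisms, and equals the `limsup`). -/
noncomputable def hloc {S : Type*} [Semigroup S] (v : S → ℝ) (φ : S → S) (x : S) : ℝ :=
  Filter.limsup (fun n : ℕ => v (traj φ x n) / ((n : ℝ) + 1)) Filter.atTop

/-- The semigroup entropy `h_S(φ) = sup_{x ∈ S} h_S(φ,x) ∈ [0,∞]`. -/
noncomputable def hent {S : Type*} [Semigroup S] (v : S → ℝ) (φ : S → S) : ℝ≥0∞ :=
  ⨆ x : S, ENNReal.ofReal (hloc v φ x)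

/-! If `φ^[n] x` has period `p`, then the trajectory of `x` is, up to a fixed prefix and a remainder
taken from finitely many elements, a power of the single element `z = T_p(φ, φ^[n] x)`, with about
`i / p` factors at time `i`. By Fekete's lemma `v (z^m) / m` converges to `h_S(id, z)`, whence
`h_S(φ, x) ≤ h_S(id, z) / p`. In an arithmetic semigroup the norms of powers grow only
logarithmically, so the right-hand side is `0`. -/

open Filter Topology Function

section Trajectory

variable {S : Type*} [Semigroup S]

lemma traj_add_add_one (φ : S → S) (x : S) (m n : ℕ) :
    traj φ x (m + n + 1) = traj φ x m * traj φ (φ^[m + 1] x) n := by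
  induction n with
  | zero => rfl
  | succ n ih =>
    calc traj φ x (m + n + 1) * φ^[m + n + 1 + 1] x
        = traj φ x m * (traj φ (φ^[m + 1] x) n * φ^[n + 1 + (m + 1)] x) := by
          rw [ih, mul_assoc, show m + n + 1 + 1 = n + 1 + (m + 1) by ring]
      _ = traj φ x m * traj φ (φ^[m + 1] x) (n + 1) := by
          rw [iterate_add_apply φ (n + 1), traj]

lemma traj_iterate (φ : S →ₙ* S) (x : S) (m n : ℕ) :
    traj φ (φ^[m] x) n = φ^[m] (traj φ x n) := by
  induction n with
  | zero => rfl
  | succ n ih =>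
    rw [traj, traj, ih, iterate_map_mul, ← iterate_add_apply, ← iterate_add_apply, add_comm m]

lemma traj_of_isPeriodicPt {φ : S → S} {y : S} {k : ℕ} (hy : IsPeriodicPt φ (k + 1) y) (m : ℕ) :
    traj φ y ((k + 1) * m + k) = traj id (traj φ y k) m := by
  induction m with
  | zero => simp only [mul_zero, zero_add, traj]
  | succ m ih =>
    have hfix : φ^[(k + 1) * m + k + 1] y = y := hy.mul_const (m + 1)
    rw [show (k + 1) * (m + 1) + k = (k + 1) * m + k + k + 1 by ring, traj_add_add_one, ih, hfix,
      traj, iterate_id, id]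

end Trajectory

section Entropy

variable {S : Type*} {v : S → ℝ}

lemma apply_iterate_le {φ : S → S} (hφ : ∀ x, v (φ x) ≤ v x) (x : S) (n : ℕ) :
    v (φ^[n] x) ≤ v x :=
  antitone_nat_of_succ_le (f := fun n ↦ v (φ^[n] x))
    (fun n ↦ by simpa only [iterate_succ_apply'] using hφ (φ^[n] x)) n.zero_le

variable [Semigroup S]

-- The shift `n - 1` undoes the indexing of `traj`; at `n = 0` it truncates to the value `v x`,
-- which keeps the sequence subadditive because `v` is nonnegative.
lemma subadditive_traj (hv0 : ∀ x, 0 ≤ v x) (hvmul : ∀ x y, v (x * y) ≤ v x + v y)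
    (φ : S →ₙ* S) (hφ : ∀ x, v (φ x) ≤ v x) (x : S) :
    Subadditive fun n ↦ v (traj φ x (n - 1)) := by
  rintro (_ | m) n
  · simpa only [zero_add] using le_add_of_nonneg_left (hv0 _)
  rcases n with _ | n
  · exact le_add_of_nonneg_right (hv0 _)
  calc v (traj φ x (m + 1 + (n + 1) - 1))
      = v (traj φ x m * φ^[m + 1] (traj φ x n)) := by
        rw [show m + 1 + (n + 1) - 1 = m + n + 1 by lia, traj_add_add_one, traj_iterate]
    _ ≤ v (traj φ x m) + v (φ^[m + 1] (traj φ x n)) := hvmul _ _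
    _ ≤ v (traj φ x m) + v (traj φ x n) := by gcongr; exact apply_iterate_le hφ _ _

theorem tendsto_hloc (hv0 : ∀ x, 0 ≤ v x) (hvmul : ∀ x y, v (x * y) ≤ v x + v y)
    (φ : S →ₙ* S) (hφ : ∀ x, v (φ x) ≤ v x) (x : S) :
    Tendsto (fun n : ℕ ↦ v (traj φ x n) / ((n : ℝ) + 1)) atTop (𝓝 (hloc v φ x)) := by
  have hsub := subadditive_traj hv0 hvmul φ hφ x
  have hbdd : BddBelow (Set.range fun n : ℕ ↦ v (traj φ x (n - 1)) / n) :=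
    ⟨0, Set.forall_mem_range.2 fun n ↦ div_nonneg (hv0 _) n.cast_nonneg⟩
  have hlim : Tendsto (fun n : ℕ ↦ v (traj φ x n) / ((n : ℝ) + 1)) atTop (𝓝 hsub.lim) := by
    simpa only [add_tsub_cancel_right, Nat.cast_add, Nat.cast_one] using
      (tendsto_add_atTop_iff_nat 1).2 (hsub.tendsto_lim hbdd)
  rwa [hloc, hlim.limsup_eq]

lemma hloc_nonneg (hv0 : ∀ x, 0 ≤ v x) (hvmul : ∀ x y, v (x * y) ≤ v x + v y)
    (φ : S →ₙ* S) (hφ : ∀ x, v (φ x) ≤ v x) (x : S) : 0 ≤ hloc v φ x :=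
  ge_of_tendsto' (tendsto_hloc hv0 hvmul φ hφ x) fun _ ↦ div_nonneg (hv0 _) (by positivity)

-- `traj` has no empty trajectory, so preperiod and period are written `n + 1` and `k + 1`; the time
-- `n + k + 2` is the first at which prefix, power and remainder all have at least one factor.
lemma exists_apply_traj_le (hv0 : ∀ x, 0 ≤ v x) (hvmul : ∀ x y, v (x * y) ≤ v x + v y)
    {φ : S → S} {x : S} {n k : ℕ} (hx : IsPeriodicPt φ (k + 1) (φ^[n + 1] x)) :
    ∃ A, ∀ t, v (traj φ x (t + (n + k + 2))) ≤
      A + v (traj id (traj φ (φ^[n + 1] x) k) (t / (k + 1))) := by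
  set y := φ^[n + 1] x
  set z := traj φ y k
  refine ⟨v (traj φ x n) + ∑ r ∈ Finset.range (k + 1), v (traj φ y r), fun t ↦ ?_⟩
  set m := t / (k + 1)
  set r := t % (k + 1)
  have hsplit : traj φ x (t + (n + k + 2)) = traj φ x n * (traj id z m * traj φ y r) := by
    have hindex : t + (n + k + 2) = n + ((k + 1) * m + k + r + 1) + 1 := by
      have := Nat.div_add_mod t (k + 1)
      lia
    have hfix : φ^[(k + 1) * m + k + 1] y = y := hx.mul_const (m + 1)
    rw [hindex, traj_add_add_one, traj_add_add_one, hfix, traj_of_isPeriodicPt hx]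
  have hremainder : v (traj φ y r) ≤ ∑ r ∈ Finset.range (k + 1), v (traj φ y r) :=
    Finset.single_le_sum (fun r _ ↦ hv0 (traj φ y r))
      (Finset.mem_range.2 (Nat.mod_lt t k.succ_pos))
  rw [hsplit]
  linarith [hvmul (traj φ x n) (traj id z m * traj φ y r), hvmul (traj id z m) (traj φ y r)]

lemma hloc_le_of_tendsto (hv0 : ∀ x, 0 ≤ v x) {φ : S → S} {x : S} {b : ℕ → ℝ} {L : ℝ} (c : ℕ)
    (hle : ∀ t, v (traj φ x (t + c)) / (((t + c : ℕ) : ℝ) + 1) ≤ b t)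
    (hb : Tendsto b atTop (𝓝 L)) : hloc v φ x ≤ L := by
  have hcobdd : IsCoboundedUnder (· ≤ ·) atTop
      fun t : ℕ ↦ v (traj φ x (t + c)) / (((t + c : ℕ) : ℝ) + 1) :=
    isCoboundedUnder_le_of_le _ (x := 0) fun t ↦ div_nonneg (hv0 _) (by positivity)
  calc hloc v φ x = limsup (fun t : ℕ ↦ v (traj φ x (t + c)) / (((t + c : ℕ) : ℝ) + 1)) atTop :=
        (limsup_nat_add (fun i : ℕ ↦ v (traj φ x i) / ((i : ℝ) + 1)) c).symm
    _ ≤ limsup b atTop := limsup_le_limsup (.of_forall hle) hcobdd hb.isBoundedUnder_le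
    _ = L := hb.limsup_eq

theorem hloc_le_hloc_id_div (hv0 : ∀ x, 0 ≤ v x) (hvmul : ∀ x y, v (x * y) ≤ v x + v y)
    {φ : S → S} {x : S} {n k : ℕ} (hx : IsPeriodicPt φ (k + 1) (φ^[n + 1] x)) :
    hloc v φ x ≤ hloc v id (traj φ (φ^[n + 1] x) k) / ((k : ℝ) + 1) := by
  obtain ⟨A, hA⟩ := exists_apply_traj_le hv0 hvmul hx
  set z := traj φ (φ^[n + 1] x) k
  set c := n + k + 2
  have hprefix : Tendsto (fun t : ℕ ↦ A / (((t + c : ℕ) : ℝ) + 1)) atTop (𝓝 0) :=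
    tendsto_const_nhds.div_atTop <| tendsto_atTop_add_const_right _ _ <|
      tendsto_natCast_atTop_atTop.comp (tendsto_add_atTop_nat c)
  have hpower : Tendsto (fun t ↦ v (traj id z (t / (k + 1))) / (((t / (k + 1) : ℕ) : ℝ) + 1))
      atTop (𝓝 (hloc v id z)) :=
    (tendsto_hloc hv0 hvmul (MulHom.id S) (fun _ ↦ le_rfl) z).comp
      (Nat.tendsto_div_const_atTop k.succ_ne_zero)
  refine hloc_le_of_tendsto hv0 c (fun t ↦ ?_)
    (by simpa only [zero_add] using hprefix.add (hpower.div_const ((k : ℝ) + 1)))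
  have hlength : (((t / (k + 1) : ℕ) : ℝ) + 1) * ((k : ℝ) + 1) ≤ ((t + c : ℕ) : ℝ) + 1 := by
    have := Nat.div_mul_le_self t (k + 1)
    exact_mod_cast (by lia : (t / (k + 1) + 1) * (k + 1) ≤ t + c + 1)
  calc v (traj φ x (t + c)) / (((t + c : ℕ) : ℝ) + 1)
      ≤ (A + v (traj id z (t / (k + 1)))) / (((t + c : ℕ) : ℝ) + 1) := by gcongr; exact hA t
    _ ≤ A / (((t + c : ℕ) : ℝ) + 1) +
          v (traj id z (t / (k + 1))) / (((t / (k + 1) : ℕ) : ℝ) + 1) / ((k : ℝ) + 1) := by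
        rw [add_div, div_div]
        gcongr
        exact hv0 _

lemma tendsto_log_add_two_div_add_one :
    Tendsto (fun n : ℕ ↦ Real.log ((n : ℝ) + 2) / ((n : ℝ) + 1)) atTop (𝓝 0) := by
  have hshift : Tendsto (fun n : ℕ ↦ (n : ℝ) + 2) atTop atTop :=
    tendsto_atTop_add_const_right _ _ tendsto_natCast_atTop_atTop
  refine ((Real.tendsto_pow_log_div_mul_add_atTop 1 (-1) 1 one_ne_zero).comp hshift).congr
    fun n ↦ ?_
  rw [comp_apply, pow_one, show 1 * ((n : ℝ) + 2) + -1 = n + 1 by ring]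

theorem hloc_eq_zero_of_le_log (hv0 : ∀ x, 0 ≤ v x) {φ : S → S} {x : S} {C : ℝ}
    (h : ∀ n : ℕ, v (traj φ x n) ≤ C * Real.log ((n : ℝ) + 2)) : hloc v φ x = 0 := by
  have hbound : Tendsto (fun n : ℕ ↦ C * (Real.log ((n : ℝ) + 2) / ((n : ℝ) + 1))) atTop (𝓝 0) := by
    simpa only [mul_zero] using tendsto_log_add_two_div_add_one.const_mul C
  refine (squeeze_zero (fun n ↦ div_nonneg (hv0 _) (by positivity)) (fun n ↦ ?_) hbound).limsup_eq
  rw [← mul_div_assoc]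
  gcongr
  exact h n

theorem hent_id_eq_zero_of_arithmetic (hv0 : ∀ x, 0 ≤ v x)
    (harith : ∀ x, ∃ C : ℝ, ∀ n : ℕ, v (traj id x n) ≤ C * Real.log ((n : ℝ) + 2)) :
    hent v id = 0 := by
  refine ENNReal.iSup_eq_zero.2 fun x ↦ ?_
  obtain ⟨C, hC⟩ := harith x
  rw [hloc_eq_zero_of_le_log hv0 hC, ENNReal.ofReal_zero]

end Entropy

theorem statement_1_general {S : Type*} [Semigroup S] {v : S → ℝ}
    (hv0 : ∀ x, 0 ≤ v x) (hvmul : ∀ x y, v (x * y) ≤ v x + v y) {φ : S → S}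
    (hlqp : ∀ x, ∃ n k : ℕ, 0 < k ∧ φ^[n] x = φ^[n + k] x) : hent v φ ≤ hent v id := by
  refine iSup_le fun x ↦ ?_
  obtain ⟨n, k, hk, hnk⟩ := hlqp x
  obtain ⟨k, rfl⟩ := Nat.exists_eq_add_one.2 hk
  have hper : IsPeriodicPt φ (k + 1) (φ^[n] x) := by
    rw [IsPeriodicPt, IsFixedPt, ← iterate_add_apply, add_comm, ← hnk]
  have hper_succ : IsPeriodicPt φ (k + 1) (φ^[n + 1] x) := by
    simpa only [iterate_succ_apply'] using hper.apply
  set z := traj φ (φ^[n + 1] x) k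
  have hz : 0 ≤ hloc v id z := hloc_nonneg hv0 hvmul (MulHom.id S) (fun _ ↦ le_rfl) z
  calc ENNReal.ofReal (hloc v φ x) ≤ ENNReal.ofReal (hloc v id z) :=
        ENNReal.ofReal_le_ofReal <| (hloc_le_hloc_id_div hv0 hvmul hper_succ).trans <|
          div_le_self hz (le_add_of_nonneg_left k.cast_nonneg)
    _ ≤ hent v id := le_iSup (fun z ↦ ENNReal.ofReal (hloc v id z)) z

/-- If `S` is an arithmetic normed semigroup and `φ : S → S` is a
contractive semigroup endomorphism which is locally quasi periodic, then `h_S(φ) = 0`. -/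
theorem statement_1 {S : Type*} [Semigroup S] (v : S → ℝ)
    (hv0 : ∀ x : S, 0 ≤ v x)
    (hvmul : ∀ x y : S, v (x * y) ≤ v x + v y)
    (harith : ∀ x : S, ∃ C : ℝ, 0 < C ∧
      ∀ n : ℕ, v (traj id x n) ≤ C * Real.log ((n : ℝ) + 2))
    (φ : S → S)
    (hφmul : ∀ x y : S, φ (x * y) = φ x * φ y)
    (hφcontr : ∀ x : S, v (φ x) ≤ v x)
    (hlqp : ∀ x : S, ∃ n k : ℕ, 0 < k ∧ φ^[n] x = φ^[n + k] x) :
    hent v φ = 0 := by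
  have hid : hent v id = 0 :=
    hent_id_eq_zero_of_arithmetic hv0 fun x ↦ (harith x).imp fun _ ↦ And.right
  exact nonpos_iff_eq_zero.1 (hid ▸ statement_1_general hv0 hvmul hlqp)
end

section
/- (Addition Theorem for the algebraic entropy) Let G be an abelian group, φ : G → G an endomorphism, H a φ-invariant subgroup of G (i.e. φ(H) ⊆ H), and φ̄ : G/H → G/H the endomorphism induced by φ on the quotient. Then h_alg(φ) = h_alg(φ↾_H) + h_alg(φ̄), as an equality in [0,∞]. -/
open scoped Pointwise ENNReal

/-- The `n`-th trajectory of a finite subset `F` under `φ`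
(`Tn φ F n = T_{n+1}(φ,F) = F·φ(F)·…·φⁿ(F)`, a pointwise product of finsets). -/
noncomputable def Tn {G : Type*} [Group G] (φ : G → G) (F : Finset G) : ℕ → Finset G
  | 0 => F
  | n + 1 =>
      letI := Classical.decEq G
      Tn φ F n * F.image φ^[n + 1]

/-- `H_alg(φ,F) = lim_n (log |T_n(φ,F)|)/n` (the limit exists, and equals the `limsup`). -/
noncomputable def Halg {G : Type*} [Group G] (φ : G → G) (F : Finset G) : ℝ :=
  Filter.limsup (fun n : ℕ => Real.log (Tn φ F n).card / ((n : ℝ) + 1)) Filter.atTop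

/-- The algebraic entropy `h_alg(φ) = sup {H_alg(φ,F) : F nonempty finite} ∈ [0,∞]`. -/
noncomputable def halg {G : Type*} [Group G] (φ : G → G) : ℝ≥0∞ :=
  ⨆ F : Finset G, ⨆ _ : F.Nonempty, ENNReal.ofReal (Halg φ F)

/-!
Write `T_n(φ, F)` for `trajectory φ F n`, and let `N → G → Q` be the central extension given by an
invariant central subgroup `N` and its quotient, with compatible endomorphisms `ψ`, `φ`, `χ`.
Trajectories are multiplicative in `F` as soon as one factor is central, so for `C ⊆ G` with image
`C̄ ⊆ Q` and for `A ⊆ N` the set `T_n(φ, C * A) = T_n(φ, C) * T_n(ψ, A)` has at least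
`|T_n(χ, C̄)| * |T_n(ψ, A)|` elements. This gives `≥`.

For `≤`, cover `T_m(φ, F)` by `S * B` where `S` has one point over each point of `T_m(χ, F̄)` and
`B ⊆ N` contains `1`. Since `T_m(φ, F)` has entropy `m * H(φ, F)` under `φ ^ m`, this yields
`m * H(φ, F) ≤ log |S| + H(ψ ^ m, B) ≤ log |T_m(χ, F̄)| + m * H(ψ, B)`.
The set `B` depends on `m`, but the bound `H(ψ, B) ≤ h(ψ)` does not; divide by `m` and let `m → ∞`.
-/

open Filter Topology

section Trajectory

variable {M M' : Type*} [Monoid M] [Monoid M'] [DecidableEq M] [DecidableEq M']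
  (φ : Monoid.End M) (F : Finset M)

/-- The trajectory `T_n(φ, F) = F * φ(F) * ⋯ * φ^{n-1}(F)`, with `n` factors (one less than
`Tn φ F n`). It is built from the left, as `T_{n+1} = F * φ(T_n)`, so that no iterate of `φ`
occurs. -/
def trajectory : ℕ → Finset M
  | 0 => 1
  | n + 1 => F * (trajectory n).image φ

theorem trajectory_one : trajectory φ F 1 = F := by
  simp only [trajectory, Finset.image_one, map_one, Finset.singleton_one, mul_one]

theorem trajectory_add (m n : ℕ) :
    trajectory φ F (m + n) = trajectory φ F m * (trajectory φ F n).image (φ ^ m) := by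
  induction m with
  | zero => simp only [trajectory, zero_add, pow_zero, Monoid.End.coe_one, Finset.image_id, one_mul]
  | succ m ih =>
    rw [Nat.succ_add, trajectory, ih, Finset.image_mul, trajectory, mul_assoc, Finset.image_image,
      pow_succ', Monoid.End.coe_mul]

theorem trajectory_mul (m n : ℕ) :
    trajectory φ F (m * n) = trajectory (φ ^ m) (trajectory φ F m) n := by
  induction n with
  | zero => rfl
  | succ n ih => rw [Nat.mul_succ, add_comm, trajectory_add, ih, trajectory]

variable {F} in
theorem trajectory_mono {F' : Finset M} (h : F ⊆ F') (n : ℕ) :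
    trajectory φ F n ⊆ trajectory φ F' n := by
  induction n with
  | zero => rfl
  | succ n ih => exact Finset.mul_subset_mul h (Finset.image_subset_image ih)

variable {F} in
theorem trajectory_nonempty (hF : F.Nonempty) (n : ℕ) : (trajectory φ F n).Nonempty := by
  induction n with
  | zero => exact Finset.one_nonempty
  | succ n ih => exact hF.mul (ih.image φ)

variable {F} in
theorem one_mem_trajectory (hF : 1 ∈ F) (n : ℕ) : 1 ∈ trajectory φ F n := by
  induction n with
  | zero => exact Finset.one_mem_one
  | succ n ih =>
    exact Finset.mem_mul.2 ⟨1, hF, 1, Finset.mem_image.2 ⟨1, ih, map_one φ⟩, one_mul 1⟩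

variable {F} in
theorem subset_trajectory (hF : 1 ∈ F) {n : ℕ} (hn : n ≠ 0) : F ⊆ trajectory φ F n := by
  obtain ⟨k, rfl⟩ := Nat.exists_eq_succ_of_ne_zero hn
  exact Finset.subset_mul_left F
    (Finset.mem_image.2 ⟨1, one_mem_trajectory φ hF k, map_one φ⟩)

theorem card_trajectory_add_le (m n : ℕ) :
    (trajectory φ F (m + n)).card ≤ (trajectory φ F m).card * (trajectory φ F n).card := by
  rw [trajectory_add]
  exact Finset.card_mul_le.trans (Nat.mul_le_mul_left _ Finset.card_image_le)

theorem card_trajectory_le (n : ℕ) : (trajectory φ F n).card ≤ F.card ^ n := by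
  induction n with
  | zero => exact Finset.card_one.le
  | succ n ih =>
    rw [pow_succ']
    exact Finset.card_mul_le.trans (Nat.mul_le_mul_left _ (Finset.card_image_le.trans ih))

variable {φ} in
theorem image_trajectory {f : M →* M'} {φ' : Monoid.End M'} (h : Function.Semiconj f φ φ') (n : ℕ) :
    (trajectory φ F n).image f = trajectory φ' (F.image f) n := by
  induction n with
  | zero => simp only [trajectory, Finset.image_one, map_one, Finset.singleton_one]
  | succ n ih =>
    rw [trajectory, trajectory, Finset.image_mul, Finset.image_image, h.comp_eq,
      ← Finset.image_image, ih]

theorem trajectory_finset_mul_of_subset_center {F' : Finset M} (hF' : (F' : Set M) ⊆ Set.center M)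
    (n : ℕ) : trajectory φ (F * F') n = trajectory φ F n * trajectory φ F' n := by
  induction n with
  | zero => exact (one_mul 1).symm
  | succ n ih =>
    have hcomm (K : Finset M) : F' * K = K * F' :=
      (Finset.image₂_swap _ F' K).trans
        (Finset.image₂_congr fun k _ _ ha => (hF' ha).comm k)
    rw [trajectory, ih, Finset.image_mul, trajectory, trajectory, mul_assoc, ← mul_assoc F',
      hcomm, mul_assoc, mul_assoc]

variable {φ} in
theorem trajectory_finset_mul_image {ι : M' →* M} {ψ : Monoid.End M'}
    (hcentral : Set.range ι ⊆ Set.center M) (hι : Function.Semiconj ι ψ φ) (A : Finset M') (n : ℕ) :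
    trajectory φ (F * A.image ι) n = trajectory φ F n * (trajectory ψ A n).image ι := by
  have hA : (A.image ι : Set M) ⊆ Set.center M := by
    rw [Finset.coe_image]
    exact (Set.image_subset_range ι A).trans hcentral
  rw [image_trajectory A hι, trajectory_finset_mul_of_subset_center φ F hA]

end Trajectory

theorem Tn_eq_trajectory {G : Type*} [Group G] [DecidableEq G] (φ : Monoid.End G)
    (F : Finset G) (n : ℕ) : Tn φ F n = trajectory φ F (n + 1) := by
  induction n with
  | zero => rw [trajectory_one, Tn]
  | succ n ih =>
    rw [trajectory_add, trajectory_one, ← ih, Monoid.End.coe_pow, Tn]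
    -- the two sides differ only in their `DecidableEq G` instances
    congr!

theorem log_natCast_le_log_natCast {a b : ℕ} (hab : a ≤ b) : Real.log a ≤ Real.log b := by
  rcases a.eq_zero_or_pos with rfl | ha
  · simpa only [Nat.cast_zero, Real.log_zero] using Real.log_natCast_nonneg b
  · exact Real.log_le_log (Nat.cast_pos.2 ha) (Nat.cast_le.2 hab)

theorem log_natCast_le_add_of_le_mul {a b c : ℕ} (h : a ≤ b * c) :
    Real.log a ≤ Real.log b + Real.log c := by
  rcases a.eq_zero_or_pos with rfl | ha
  · simpa only [Nat.cast_zero, Real.log_zero] using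
      add_nonneg (Real.log_natCast_nonneg b) (Real.log_natCast_nonneg c)
  · obtain ⟨hb, hc⟩ := mul_ne_zero_iff.1 (ha.trans_le h).ne'
    rw [← Real.log_mul (Nat.cast_ne_zero.2 hb) (Nat.cast_ne_zero.2 hc), ← Nat.cast_mul]
    exact log_natCast_le_log_natCast h

section Halg

variable {G G' : Type*} [Group G] [Group G'] (φ : Monoid.End G) (F : Finset G)

theorem tendsto_log_card_trajectory_div [DecidableEq G] :
    Tendsto (fun n : ℕ => Real.log (trajectory φ F n).card / n) atTop (𝓝 (Halg φ F)) := by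
  have hsub : Subadditive fun n => Real.log (trajectory φ F n).card := fun m n =>
    log_natCast_le_add_of_le_mul (card_trajectory_add_le φ F m n)
  have hbdd : BddBelow (Set.range fun n : ℕ => Real.log (trajectory φ F n).card / n) :=
    ⟨0, Set.forall_mem_range.2 fun n => div_nonneg (Real.log_natCast_nonneg _) n.cast_nonneg⟩
  have hlim := hsub.tendsto_lim hbdd
  have hHalg : Halg φ F = hsub.lim := by
    refine (((tendsto_add_atTop_iff_nat 1).2 hlim).congr fun n => ?_).limsup_eq
    rw [Tn_eq_trajectory, Nat.cast_succ]
  rwa [hHalg]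

theorem Halg_nonneg : 0 ≤ Halg φ F := by
  classical
  exact ge_of_tendsto' (tendsto_log_card_trajectory_div φ F) fun n =>
    div_nonneg (Real.log_natCast_nonneg _) n.cast_nonneg

variable {F} in
theorem Halg_mono {F' : Finset G} (h : F ⊆ F') : Halg φ F ≤ Halg φ F' := by
  classical
  refine le_of_tendsto_of_tendsto' (tendsto_log_card_trajectory_div φ F)
    (tendsto_log_card_trajectory_div φ F') fun n => div_le_div_of_nonneg_right ?_ n.cast_nonneg
  exact log_natCast_le_log_natCast (Finset.card_le_card (trajectory_mono φ h n))

theorem Halg_pow_trajectory [DecidableEq G] {m : ℕ} (hm : m ≠ 0) :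
    Halg (φ ^ m : Monoid.End G) (trajectory φ F m) = m * Halg φ F := by
  have hsubseq := ((tendsto_log_card_trajectory_div φ F).comp
    (tendsto_id.const_mul_atTop' (Nat.pos_of_ne_zero hm))).const_mul (m : ℝ)
  refine tendsto_nhds_unique (tendsto_log_card_trajectory_div _ _) (hsubseq.congr fun n => ?_)
  have hm' : (m : ℝ) ≠ 0 := Nat.cast_ne_zero.2 hm
  simp only [Function.comp_apply, id_eq, trajectory_mul, Nat.cast_mul]
  rw [← mul_div_assoc, mul_div_mul_left _ _ hm']

variable {φ} in
theorem Halg_mul_image_le [DecidableEq G] {ι : G' →* G} {ψ : Monoid.End G'}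
    (hcentral : Set.range ι ⊆ Set.center G) (hι : Function.Semiconj ι ψ φ) (B : Finset G') :
    Halg φ (F * B.image ι) ≤ Real.log F.card + Halg ψ B := by
  classical
  refine le_of_tendsto_of_tendsto (tendsto_log_card_trajectory_div _ _)
    ((tendsto_log_card_trajectory_div ψ B).const_add _) ?_
  filter_upwards [eventually_gt_atTop 0] with n hn
  have hn' : (0 : ℝ) < n := Nat.cast_pos.2 hn
  have hcard : (trajectory φ (F * B.image ι) n).card ≤ F.card ^ n * (trajectory ψ B n).card := by
    rw [trajectory_finset_mul_image F hcentral hι]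
    exact Finset.card_mul_le.trans (Nat.mul_le_mul (card_trajectory_le φ F n) Finset.card_image_le)
  have hlog := log_natCast_le_add_of_le_mul hcard
  rw [Nat.cast_pow, Real.log_pow] at hlog
  calc Real.log (trajectory φ (F * B.image ι) n).card / n
      ≤ (n * Real.log F.card + Real.log (trajectory ψ B n).card) / n := by gcongr
    _ = Real.log F.card + Real.log (trajectory ψ B n).card / n := by
        rw [add_div, mul_div_cancel_left₀ _ hn'.ne']

end Halg

theorem ofReal_Halg_le_halg {G : Type*} [Group G] (φ : G → G) {F : Finset G} (hF : F.Nonempty) :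
    ENNReal.ofReal (Halg φ F) ≤ halg φ :=
  le_iSup₂ (f := fun (F : Finset G) (_ : F.Nonempty) => ENNReal.ofReal (Halg φ F)) F hF

section Extension

variable {N G Q : Type*} [Group N] [Group G] [Group Q] {ι : N →* G} {π : G →* Q}

theorem card_image_mul_card_le_card_mul_image [DecidableEq G] [DecidableEq Q]
    (hinj : Function.Injective ι) (hle : ι.range ≤ π.ker) (C : Finset G) (A : Finset N) :
    (C.image π).card * A.card ≤ (C * A.image ι).card := by
  obtain ⟨S, hSC, hSinj, hS⟩ := Finset.exists_subset_injOn_image_eq_of_surjOn (f := π) C (C.image π)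
    (by rw [Finset.coe_image]; exact Set.surjOn_image π C)
  rw [← hS, Finset.card_image_of_injOn hSinj, ← Finset.card_product]
  refine Finset.card_le_card_of_injOn (fun p => p.1 * ι p.2) ?_ ?_
  · rintro ⟨s, a⟩ hp
    obtain ⟨hs, ha⟩ := Finset.mem_product.1 hp
    exact Finset.mul_mem_mul (hSC hs) (Finset.mem_image_of_mem ι ha)
  · rintro ⟨s, a⟩ hp ⟨t, b⟩ hq (h : s * ι a = t * ι b)
    have hπι (x : N) : π (ι x) = 1 := hle ⟨x, rfl⟩
    have hπ : π s = π t := by simpa only [map_mul, hπι, mul_one] using congrArg π h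
    obtain rfl : s = t := hSinj (Finset.mem_product.1 hp).1 (Finset.mem_product.1 hq).1 hπ
    rw [hinj (mul_left_cancel h)]

theorem exists_subset_mul_image [DecidableEq G] [DecidableEq Q]
    (hle : π.ker ≤ ι.range) (A : Finset G) :
    ∃ (S : Finset G) (B : Finset N),
      S.card = (A.image π).card ∧ 1 ∈ B ∧ A ⊆ S * B.image ι := by
  classical
  obtain ⟨S, -, hSinj, hS⟩ := Finset.exists_subset_injOn_image_eq_of_surjOn (f := π) A (A.image π)
    (by rw [Finset.coe_image]; exact Set.surjOn_image π A)
  obtain ⟨B, -, hB⟩ := Finset.subset_set_image_iff (f := ι) (s := Set.univ)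
    (t := (S⁻¹ * A).filter (· ∈ ι.range)).1 fun x hx => by
      rw [Set.image_univ]
      exact (Finset.mem_filter.1 hx).2
  refine ⟨S, insert 1 B, ?_, Finset.mem_insert_self 1 B, fun a ha => ?_⟩
  · rw [← hS, Finset.card_image_of_injOn hSinj]
  obtain ⟨s, hs, hsa⟩ := Finset.mem_image.1 (hS ▸ Finset.mem_image_of_mem π ha)
  have hrange : s⁻¹ * a ∈ ι.range := hle (MonoidHom.mem_ker.2 (by
    rw [map_mul, map_inv, hsa, inv_mul_cancel]))
  have hmem : s⁻¹ * a ∈ B.image ι := hB ▸ Finset.mem_filter.2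
    ⟨Finset.mul_mem_mul (Finset.inv_mem_inv hs) ha, hrange⟩
  exact Finset.mem_mul.2 ⟨s, hs, s⁻¹ * a,
    Finset.image_subset_image (Finset.subset_insert 1 B) hmem, mul_inv_cancel_left s a⟩

variable {ψ : Monoid.End N} {φ : Monoid.End G} {χ : Monoid.End Q}

theorem Halg_add_Halg_image_le [DecidableEq G] [DecidableEq Q] (hinj : Function.Injective ι)
    (hle : ι.range ≤ π.ker) (hcentral : Set.range ι ⊆ Set.center G)
    (hι : Function.Semiconj ι ψ φ) (hπ : Function.Semiconj π φ χ)
    {A : Finset N} (hA : A.Nonempty) {C : Finset G} (hC : C.Nonempty) :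
    Halg ψ A + Halg χ (C.image π) ≤ Halg φ (C * A.image ι) := by
  classical
  refine le_of_tendsto_of_tendsto' ((tendsto_log_card_trajectory_div ψ A).add
    (tendsto_log_card_trajectory_div χ _)) (tendsto_log_card_trajectory_div φ _) fun n => ?_
  have hA0 := (trajectory_nonempty ψ hA n).card_ne_zero
  have hC0 := (trajectory_nonempty χ (hC.image π) n).card_ne_zero
  rw [← add_div, ← Real.log_mul (Nat.cast_ne_zero.2 hA0) (Nat.cast_ne_zero.2 hC0), ← Nat.cast_mul,
    trajectory_finset_mul_image C hcentral hι, ← image_trajectory C hπ, mul_comm]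
  exact div_le_div_of_nonneg_right
    (log_natCast_le_log_natCast (card_image_mul_card_le_card_mul_image hinj hle _ _)) n.cast_nonneg

theorem exists_Halg_le_log_card_div_add_Halg [DecidableEq Q] (hle : π.ker ≤ ι.range)
    (hcentral : Set.range ι ⊆ Set.center G) (hι : Function.Semiconj ι ψ φ)
    (hπ : Function.Semiconj π φ χ) (F : Finset G) {m : ℕ} (hm : m ≠ 0) :
    ∃ B : Finset N, B.Nonempty ∧
      Halg φ F ≤ Real.log (trajectory χ (F.image π) m).card / m + Halg ψ B := by
  classical
  obtain ⟨S, B, hS, hB, hsub⟩ := exists_subset_mul_image hle (trajectory φ F m)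
  rw [image_trajectory F hπ] at hS
  have hιm : Function.Semiconj ι (ψ ^ m : Monoid.End N) (φ ^ m : Monoid.End G) :=
    hι.iterate_right m
  have hm' : (0 : ℝ) < m := Nat.cast_pos.2 (Nat.pos_of_ne_zero hm)
  refine ⟨B, ⟨1, hB⟩, le_of_mul_le_mul_left ?_ hm'⟩
  calc m * Halg φ F
      = Halg (φ ^ m : Monoid.End G) (trajectory φ F m) := (Halg_pow_trajectory φ F hm).symm
    _ ≤ Halg (φ ^ m : Monoid.End G) (S * B.image ι) := Halg_mono _ hsub
    _ ≤ Real.log S.card + Halg (ψ ^ m : Monoid.End N) B := Halg_mul_image_le S hcentral hιm B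
    _ ≤ Real.log S.card + Halg (ψ ^ m : Monoid.End N) (trajectory ψ B m) := by
        gcongr
        exact Halg_mono _ (subset_trajectory ψ hB hm)
    _ = m * (Real.log (trajectory χ (F.image π) m).card / m + Halg ψ B) := by
        rw [Halg_pow_trajectory ψ B hm, hS, mul_add, mul_div_cancel₀ _ hm'.ne']

theorem halg_add_halg_le (hinj : Function.Injective ι) (hsurj : Function.Surjective π)
    (hle : ι.range ≤ π.ker) (hcentral : Set.range ι ⊆ Set.center G)
    (hι : Function.Semiconj ι ψ φ) (hπ : Function.Semiconj π φ χ) :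
    halg ψ + halg χ ≤ halg φ := by
  classical
  refine ENNReal.biSup_add_biSup_le' ⟨1, Finset.one_nonempty⟩ ⟨1, Finset.one_nonempty⟩
    fun A hA D hD => ?_
  obtain ⟨C, -, rfl⟩ := Finset.subset_set_image_iff.1
    ((Set.image_univ_of_surjective hsurj).symm ▸ Set.subset_univ (D : Set Q))
  have hC : C.Nonempty := Finset.image_nonempty.1 hD
  rw [← ENNReal.ofReal_add (Halg_nonneg ψ A) (Halg_nonneg χ _)]
  exact (ENNReal.ofReal_le_ofReal
    (Halg_add_Halg_image_le hinj hle hcentral hι hπ hA hC)).trans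
      (ofReal_Halg_le_halg φ (hC.mul (hA.image ι)))

theorem halg_le_halg_add (hle : π.ker ≤ ι.range) (hcentral : Set.range ι ⊆ Set.center G)
    (hι : Function.Semiconj ι ψ φ) (hπ : Function.Semiconj π φ χ) :
    halg φ ≤ halg ψ + halg χ := by
  classical
  refine iSup₂_le fun F hF => ?_
  have hbound : ∀ m : ℕ, m ≠ 0 → ENNReal.ofReal (Halg φ F) ≤
      halg ψ + ENNReal.ofReal (Real.log (trajectory χ (F.image π) m).card / m) := fun m hm => by
    obtain ⟨B, hB, hFB⟩ := exists_Halg_le_log_card_div_add_Halg hle hcentral hι hπ F hm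
    rw [add_comm]
    exact (ENNReal.ofReal_le_ofReal hFB).trans
      (ENNReal.ofReal_add_le.trans (add_le_add_right (ofReal_Halg_le_halg ψ hB) _))
  have hlim := (ENNReal.tendsto_ofReal
    (tendsto_log_card_trajectory_div χ (F.image π))).const_add (halg ψ)
  calc ENNReal.ofReal (Halg φ F)
      ≤ halg ψ + ENNReal.ofReal (Halg χ (F.image π)) :=
        ge_of_tendsto hlim ((eventually_ne_atTop 0).mono hbound)
    _ ≤ halg ψ + halg χ := by
        gcongr
        exact ofReal_Halg_le_halg χ (hF.image π)

end Extension

theorem statement_14_general {G : Type*} [Group G] (φ : G →* G) (H : Subgroup G) [H.Normal]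
    (hcenter : H ≤ Subgroup.center G) (hH : H ≤ H.comap φ) :
    halg ⇑φ
      = halg (fun x : H => (⟨φ x, hH x.2⟩ : H))
        + halg ⇑(QuotientGroup.map H H φ hH) := by
  let ψ : Monoid.End H := (φ.comp H.subtype).codRestrict H fun x => hH x.2
  let χ : Monoid.End (G ⧸ H) := QuotientGroup.map H H φ hH
  have hcentral : Set.range H.subtype ⊆ Set.center G := Set.range_subset_iff.2 fun x => hcenter x.2
  have hexact : H.subtype.range = (QuotientGroup.mk' H).ker := by
    rw [H.range_subtype, QuotientGroup.ker_mk']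
  have hι : Function.Semiconj H.subtype ψ φ := fun _ => rfl
  have hπ : Function.Semiconj (QuotientGroup.mk' H) φ χ := fun _ => rfl
  have hle : halg φ ≤ halg ψ + halg χ := halg_le_halg_add (φ := φ) hexact.ge hcentral hι hπ
  have hge : halg ψ + halg χ ≤ halg φ := halg_add_halg_le (φ := φ) H.subtype_injective
    (QuotientGroup.mk'_surjective H) hexact.le hcentral hι hπ
  exact le_antisymm hle hge

/-- **Addition Theorem.** For an endomorphism `φ` of an abelian group `G`
and a `φ`-invariant subgroup `H`, with `φ↾H` the restriction and `φ̄` the induced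
endomorphism of `G/H`, one has `h_alg(φ) = h_alg(φ↾H) + h_alg(φ̄)` in `[0,∞]`. -/
theorem statement_14 {G : Type*} [CommGroup G] (φ : G →* G)
    (H : Subgroup G) (hH : H ≤ H.comap φ) :
    halg ⇑φ
      = halg (fun x : H => (⟨φ x, hH x.2⟩ : H))
        + halg ⇑(QuotientGroup.map H H φ hH) :=
  statement_14_general φ H (CommGroup.center_eq_top (G := G) ▸ le_top) hH
end

section
/- (Dichotomy Theorem for growth) Let G be an abelian group, φ : G → G an endomorphism, and F a nonempty finite subset of G such that G is generated (as a group) by the trajectory ⋃_{n≥0} φ^n(F). Then the growth function γ_{φ,F}(n) = |T_n(φ,F)| is either polynomial or exponential: either there exist d ∈ ℕ and C > 0 such that γ_{φ,F}(n) ≤ C·n^d for all n ≥ 1, or there exist a real b > 1 and n_0 such that γ_{φ,F}(n) ≥ b^n for all n ≥ n_0. In particular, no finitely generated flow in the category of abelian groups has intermediate growth. -/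
open scoped Pointwise ENNReal

/-!
Translating `F` only translates its trajectories, so we may assume `1 ∈ F`. Then `F` contains
every pair `{1, u}` with `u ∈ F` and is contained in the product of these pairs, and trajectories
are multiplicative in `F`; so it suffices to treat `F = {1, u}`. Written additively, its trajectory
is the set of subset sums of `u, φ u, …, φⁿ u`, that is, of `1, x, …, xⁿ` for the class `x` of `X`
in `ℤ[X] ⧸ Ann u`.

If for some `k > 0` the subset sums of the powers of `x ^ k` are pairwise distinct, the growth is
exponential. Otherwise every `x ^ k` is a root of a nonzero polynomial with coefficients in
`{-1, 0, 1}`. For `k = 1` this makes `x` integral, so that `ℤ[x]` is a finitely generated abelian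
group. Modulo torsion, a complex eigenvalue `z` of multiplication by `x` satisfies the same
relations, hence `‖z‖ ^ k < 2` for every `k`, i.e. `‖z‖ ≤ 1`. By Kronecker's theorem the nonzero
eigenvalues are roots of unity, so `(x ^ (K + 1) - x) ^ b` is torsion for some `K` and `b`, and this
recurrence makes the coordinates of `x ^ j` grow polynomially in `j`.
-/

section Growth

variable {u v : ℕ → ℝ}

/-- Polynomial growth of a sequence, as in the first alternative of the dichotomy. The bound is
polynomial in `n + 1` because `Tn φ F n` is the trajectory of length `n + 1`. -/
def PolynomiallyBounded (u : ℕ → ℝ) : Prop :=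
  ∃ d : ℕ, ∃ C : ℝ, 0 < C ∧ ∀ n : ℕ, u n ≤ C * ((n : ℝ) + 1) ^ d

/-- Exponential growth of a sequence, as in the second alternative of the dichotomy, with the same
shift of the index by one as in `PolynomiallyBounded`. -/
def ExponentiallyGrowing (u : ℕ → ℝ) : Prop :=
  ∃ b : ℝ, 1 < b ∧ ∃ n₀ : ℕ, ∀ n : ℕ, n₀ ≤ n → b ^ (n + 1) ≤ u n

namespace PolynomiallyBounded

theorem mono (hv : PolynomiallyBounded v) (h : ∀ n, u n ≤ v n) : PolynomiallyBounded u := by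
  obtain ⟨d, C, hC, hv⟩ := hv
  exact ⟨d, C, hC, fun n => (h n).trans (hv n)⟩

theorem const (c : ℝ) : PolynomiallyBounded fun _ => c :=
  ⟨0, max c 1, by positivity, fun n => by simp⟩

theorem add (hu : PolynomiallyBounded u) (hv : PolynomiallyBounded v) :
    PolynomiallyBounded fun n => u n + v n := by
  obtain ⟨d, C, hC, hu⟩ := hu
  obtain ⟨e, D, hD, hv⟩ := hv
  refine ⟨max d e, C + D, by positivity, fun n => ?_⟩
  have hn : (1 : ℝ) ≤ (n : ℝ) + 1 := by simp
  calc u n + v n ≤ C * ((n : ℝ) + 1) ^ d + D * ((n : ℝ) + 1) ^ e := add_le_add (hu n) (hv n)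
    _ ≤ C * ((n : ℝ) + 1) ^ max d e + D * ((n : ℝ) + 1) ^ max d e := by
      gcongr <;> first | exact hn | exact le_max_left d e | exact le_max_right d e
    _ = (C + D) * ((n : ℝ) + 1) ^ max d e := by ring

theorem mul (hu : PolynomiallyBounded u) (hv : PolynomiallyBounded v) (hv₀ : ∀ n, 0 ≤ v n) :
    PolynomiallyBounded fun n => u n * v n := by
  obtain ⟨d, C, hC, hu⟩ := hu
  obtain ⟨e, D, hD, hv⟩ := hv
  refine ⟨d + e, C * D, by positivity, fun n => ?_⟩
  calc u n * v n ≤ (C * ((n : ℝ) + 1) ^ d) * (D * ((n : ℝ) + 1) ^ e) :=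
      mul_le_mul (hu n) (hv n) (hv₀ n) (by positivity)
    _ = C * D * ((n : ℝ) + 1) ^ (d + e) := by ring

theorem prod {ι : Type*} {s : Finset ι} {w : ι → ℕ → ℝ}
    (hw : ∀ i ∈ s, PolynomiallyBounded (w i)) (hw₀ : ∀ i ∈ s, ∀ n, 0 ≤ w i n) :
    PolynomiallyBounded fun n => ∏ i ∈ s, w i n := by
  classical
  induction s using Finset.induction_on with
  | empty => simpa using const 1
  | insert i s hi ih =>
    rw [Finset.forall_mem_insert] at hw hw₀
    simp only [Finset.prod_insert hi]
    exact hw.1.mul (ih hw.2 hw₀.2) fun n => Finset.prod_nonneg fun j hj => hw₀.2 j hj n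

theorem sum_range (hu : PolynomiallyBounded u) :
    PolynomiallyBounded fun n => ∑ j ∈ Finset.range (n + 1), u j := by
  obtain ⟨d, C, hC, hu⟩ := hu
  refine ⟨d + 1, C, hC, fun n => ?_⟩
  calc ∑ j ∈ Finset.range (n + 1), u j
      ≤ ∑ _j ∈ Finset.range (n + 1), C * ((n : ℝ) + 1) ^ d := by
        refine Finset.sum_le_sum fun j hj => (hu j).trans ?_
        gcongr
        exact Nat.lt_succ_iff.1 (Finset.mem_range.1 hj)
    _ = C * ((n : ℝ) + 1) ^ (d + 1) := by
        rw [Finset.sum_const, Finset.card_range, nsmul_eq_mul]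
        push_cast
        ring

theorem of_recurrence {r m : ℕ} (hrm : r < m) (hv : PolynomiallyBounded v)
    (h : ∀ j, u (j + m) ≤ u (j + r) + v j) : PolynomiallyBounded u := by
  obtain ⟨d, C, hC, hv⟩ := hv
  let M := ∑ i ∈ Finset.range m, |u i|
  have hbound : ∀ j : ℕ, u j ≤ M + j * (C * ((j : ℝ) + 1) ^ d) := by
    intro j
    induction j using Nat.strong_induction_on with
    | _ j ih =>
    rcases lt_or_ge j m with hj | hj
    · calc u j ≤ |u j| := le_abs_self _
        _ ≤ M := Finset.single_le_sum (f := fun i => |u i|) (fun i _ => abs_nonneg _)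
            (Finset.mem_range.2 hj)
        _ ≤ _ := le_add_of_nonneg_right (by positivity)
    · obtain ⟨i, rfl⟩ := Nat.exists_eq_add_of_le' hj
      have hr : ((i + r : ℕ) : ℝ) + 1 ≤ (i + m : ℕ) := by exact_mod_cast Nat.add_lt_add_left hrm i
      have hi : (i : ℝ) ≤ (i + m : ℕ) := by exact_mod_cast Nat.le_add_right i m
      calc u (i + m) ≤ u (i + r) + v i := h i
        _ ≤ M + (i + r : ℕ) * (C * (((i + r : ℕ) : ℝ) + 1) ^ d) + C * ((i : ℝ) + 1) ^ d :=
            add_le_add (ih _ (by omega)) (hv i)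
        _ ≤ M + (i + r : ℕ) * (C * (((i + m : ℕ) : ℝ) + 1) ^ d) +
              C * (((i + m : ℕ) : ℝ) + 1) ^ d := by gcongr
        _ = M + (((i + r : ℕ) : ℝ) + 1) * (C * (((i + m : ℕ) : ℝ) + 1) ^ d) := by ring
        _ ≤ M + (i + m : ℕ) * (C * (((i + m : ℕ) : ℝ) + 1) ^ d) := by gcongr
  have hlin : PolynomiallyBounded fun j => (j : ℝ) := ⟨1, 1, one_pos, fun n => by simp⟩
  have hpow : PolynomiallyBounded fun j => C * ((j : ℝ) + 1) ^ d := ⟨d, C, hC, fun _ => le_rfl⟩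
  exact ((const M).add (hlin.mul hpow fun n => by positivity)).mono hbound

end PolynomiallyBounded

namespace ExponentiallyGrowing

theorem mono (hu : ExponentiallyGrowing u) (h : ∀ n, u n ≤ v n) : ExponentiallyGrowing v := by
  obtain ⟨b, hb, n₀, hu⟩ := hu
  exact ⟨b, hb, n₀, fun n hn => (hu n hn).trans (h n)⟩

theorem of_two_pow_le {k : ℕ} (hk : 0 < k) (h : ∀ n, 2 ^ (n / k + 1) ≤ u n) :
    ExponentiallyGrowing u := by
  refine ⟨2 ^ (k : ℝ)⁻¹, Real.one_lt_rpow one_lt_two (by positivity), 0, fun n _ => ?_⟩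
  have hn : ((n + 1 : ℕ) : ℝ) ≤ k * (n / k + 1 : ℕ) := by
    exact_mod_cast Nat.lt_mul_div_succ n hk
  calc ((2 : ℝ) ^ (k : ℝ)⁻¹) ^ (n + 1) = 2 ^ ((k : ℝ)⁻¹ * (n + 1 : ℕ)) := by
        rw [← Real.rpow_natCast, ← Real.rpow_mul zero_le_two]
    _ ≤ 2 ^ ((n / k + 1 : ℕ) : ℝ) := by
        refine Real.rpow_le_rpow_of_exponent_le one_le_two ?_
        rwa [inv_mul_le_iff₀ (by positivity)]
    _ = 2 ^ (n / k + 1) := Real.rpow_natCast _ _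
    _ ≤ u n := h n

end ExponentiallyGrowing

end Growth

section IntegerPolynomials

open Polynomial

variable {p : ℤ[X]}

theorem isUnit_leadingCoeff_of_abs_coeff_le_one (hp : p ≠ 0) (h : ∀ i, |p.coeff i| ≤ 1) :
    IsUnit p.leadingCoeff :=
  Int.isUnit_iff_abs_eq.2 <| le_antisymm (h _) (Int.one_le_abs (leadingCoeff_ne_zero.2 hp))

theorem norm_lt_two_of_abs_coeff_le_one (hp : p ≠ 0) (h : ∀ i, |p.coeff i| ≤ 1) {z : ℂ}
    (hz : aeval z p = 0) : ‖z‖ < 2 := by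
  have hinj : Function.Injective (algebraMap ℤ ℂ) := (algebraMap ℤ ℂ).injective_int
  have hnorm : ∀ n : ℤ, ‖algebraMap ℤ ℂ n‖ = (|n| : ℤ) := fun n => by simp
  have hlead : ‖(p.map (algebraMap ℤ ℂ)).leadingCoeff‖₊ = 1 := by
    rw [leadingCoeff_map_of_injective hinj, ← NNReal.coe_inj, coe_nnnorm, hnorm,
      Int.isUnit_iff_abs_eq.1 (isUnit_leadingCoeff_of_abs_coeff_le_one hp h),
      Int.cast_one, NNReal.coe_one]
  have hroot : (p.map (algebraMap ℤ ℂ)).IsRoot z := by rwa [IsRoot, eval_map_algebraMap]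
  have hbound : cauchyBound (p.map (algebraMap ℤ ℂ)) ≤ 2 := by
    rw [cauchyBound, hlead, div_one, ← one_add_one_eq_two]
    gcongr
    refine Finset.sup_le fun i _ => ?_
    rw [coeff_map, ← NNReal.coe_le_coe, coe_nnnorm, hnorm, NNReal.coe_one]
    exact_mod_cast h i
  have hp' : p.map (algebraMap ℤ ℂ) ≠ 0 := (Polynomial.map_ne_zero_iff hinj).2 hp
  exact_mod_cast (hroot.norm_lt_cauchyBound hp').trans_le hbound

theorem exists_aeval_eq_zero_of_not_injective_sum_pow {R : Type*} [Ring R] {x : R}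
    (h : ¬ Function.Injective fun S : Finset ℕ => ∑ i ∈ S, x ^ i) :
    ∃ p : ℤ[X], p ≠ 0 ∧ (∀ i, |p.coeff i| ≤ 1) ∧ aeval x p = 0 := by
  obtain ⟨S, T, hST, hne⟩ : ∃ S T : Finset ℕ, ∑ i ∈ S, x ^ i = ∑ i ∈ T, x ^ i ∧ S ≠ T := by
    simpa only [Function.Injective, not_forall, exists_prop] using h
  let p : ℤ[X] := ∑ i ∈ S, X ^ i - ∑ i ∈ T, X ^ i
  have hcoeff : ∀ i, p.coeff i = (if i ∈ S then 1 else 0) - (if i ∈ T then 1 else 0) := fun i => by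
    simp [p, coeff_X_pow]
  refine ⟨p, fun hp => hne ?_, fun i => ?_, ?_⟩
  · ext i
    have hi : (0 : ℤ) = (if i ∈ S then 1 else 0) - (if i ∈ T then 1 else 0) := by
      rw [← hcoeff, hp, coeff_zero]
    by_cases hS : i ∈ S <;> by_cases hT : i ∈ T <;> simp [hS, hT] at hi ⊢
  · rw [hcoeff]
    split_ifs <;> simp
  · simp only [p, map_sub, map_sum, map_pow, aeval_X, hST, sub_self]

theorem mahlerMeasure_eq_one_of_norm_root_le_one (hp : p.Monic)
    (h : ∀ z : ℂ, aeval z p = 0 → ‖z‖ ≤ 1) :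
    (p.map (Int.castRingHom ℂ)).mahlerMeasure = 1 := by
  rw [mahlerMeasure_eq_leadingCoeff_mul_prod_roots, (hp.map _).leadingCoeff, norm_one, one_mul]
  refine Multiset.prod_eq_one fun a ha => ?_
  obtain ⟨z, hz, rfl⟩ := Multiset.mem_map.1 ha
  exact max_eq_left (h z (mem_aroots.1 hz).2)

theorem exists_pow_succ_eq_self_of_norm_root_le_one (hp : p.Monic)
    (h : ∀ z : ℂ, aeval z p = 0 → ‖z‖ ≤ 1) :
    ∃ K : ℕ, 0 < K ∧ ∀ z : ℂ, aeval z p = 0 → z ^ (K + 1) = z := by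
  let roots := (p.aroots ℂ).toFinset.erase 0
  have hfin : ∀ z ∈ roots, IsOfFinOrder z := fun z hz => by
    obtain ⟨hz₀, hz⟩ := Finset.mem_erase.1 hz
    exact isOfFinOrder_iff_pow_eq_one.2 <| pow_eq_one_of_mahlerMeasure_eq_one
      (mahlerMeasure_eq_one_of_norm_root_le_one hp h) hz₀ (Multiset.mem_toFinset.1 hz)
  refine ⟨∏ z ∈ roots, orderOf z, Finset.prod_pos fun z hz => (hfin z hz).orderOf_pos,
    fun z hz => ?_⟩
  rcases eq_or_ne z 0 with rfl | hz₀
  · simp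
  · have hmem : z ∈ roots :=
      Finset.mem_erase.2 ⟨hz₀, Multiset.mem_toFinset.2 (mem_aroots.2 ⟨hp.ne_zero, hz⟩)⟩
    rw [pow_succ, orderOf_dvd_iff_pow_eq_one.1 (Finset.dvd_prod_of_mem _ hmem), one_mul]

theorem dvd_pow_natDegree_of_forall_root (hp : p.Monic) {q : ℤ[X]}
    (h : ∀ z : ℂ, aeval z p = 0 → aeval z q = 0) : p ∣ q ^ p.natDegree := by
  have hsplits := IsAlgClosed.splits (p.map (algebraMap ℤ ℂ))
  have hdeg : p.natDegree = Multiset.card (p.aroots ℂ) := by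
    rw [← hp.natDegree_map (algebraMap ℤ ℂ), hsplits.natDegree_eq_card_roots]
  rw [← map_dvd_map _ (algebraMap ℤ ℂ).injective_int hp, Polynomial.map_pow,
    hsplits.eq_prod_roots_of_monic (hp.map _), hdeg, ← Multiset.prod_replicate,
    ← Multiset.map_const']
  refine Multiset.prod_dvd_prod_of_dvd _ _ fun z hz => ?_
  rw [dvd_iff_isRoot, IsRoot, eval_map_algebraMap]
  exact h z (mem_aroots.1 hz).2

theorem aeval_eq_zero_of_aeval_charpoly_eq_zero {ι R K : Type*} [Fintype ι] [DecidableEq ι]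
    [CommRing R] [Field K] [Algebra R K] {A : Matrix ι ι R} {q : R[X]} (hq : aeval A q = 0)
    {z : K} (hz : aeval z A.charpoly = 0) : aeval z q = 0 := by
  let B : Matrix ι ι K := (Algebra.ofId R K).mapMatrix A
  have hqB : aeval B (q.map (algebraMap R K)) = 0 := by
    rw [aeval_map_algebraMap, aeval_algHom_apply, hq, map_zero]
  have hzB : z ∈ spectrum K B := by
    have hcharpoly : B.charpoly = A.charpoly.map (algebraMap R K) := A.charpoly_map _
    rwa [Matrix.mem_spectrum_iff_isRoot_charpoly, hcharpoly, IsRoot, eval_map_algebraMap]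
  have : Nontrivial (Matrix ι ι K) := by
    by_contra hsub
    rw [not_nontrivial_iff_subsingleton] at hsub
    simp [spectrum.of_subsingleton] at hzB
  have hmem := spectrum.subset_polynomial_aeval B (q.map (algebraMap R K)) ⟨z, hzB, rfl⟩
  simpa only [hqB, spectrum.zero_eq, Set.mem_singleton_iff, eval_map_algebraMap] using hmem

end IntegerPolynomials

section SubsetSums

open Polynomial nonZeroDivisors

/-- The set of all sums of a subfamily of `a 0, …, a (n - 1)`. For `a j = φ^j u` it is the
additive form of the trajectory of the two-element set `{1, u}`. -/
def subsetSums {A : Type*} [AddCommMonoid A] [DecidableEq A] (a : ℕ → A) (n : ℕ) : Finset A :=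
  (Finset.range n).powerset.image fun S => ∑ i ∈ S, a i

theorem image_subsetSums {A B : Type*} [AddCommMonoid A] [AddCommMonoid B] [DecidableEq A]
    [DecidableEq B] (e : A →+ B) (a : ℕ → A) (n : ℕ) :
    (subsetSums a n).image e = subsetSums (fun j => e (a j)) n := by
  simp only [subsetSums, Finset.image_image, Function.comp_def, map_sum]

theorem natAbs_le_sum_range_of_mem_subsetSums {A : Type*} [AddCommMonoid A] [DecidableEq A]
    (ℓ : A →+ ℤ) {a : ℕ → A} {n : ℕ} {x : A} (hx : x ∈ subsetSums a n) :
    (ℓ x).natAbs ≤ ∑ j ∈ Finset.range n, (ℓ (a j)).natAbs := by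
  obtain ⟨S, hS, rfl⟩ := Finset.mem_image.1 hx
  rw [map_sum]
  exact (Int.natAbs_sum_le _ _).trans <| Finset.sum_le_sum_of_subset (Finset.mem_powerset.1 hS)

theorem card_le_prod_of_natAbs_coord_le {ι N : Type*} [Fintype ι] [AddCommGroup N]
    (b : Module.Basis ι ℤ N) {s : Finset N} {w : ι → ℕ}
    (h : ∀ x ∈ s, ∀ i, (b.coord i x).natAbs ≤ w i) : s.card ≤ ∏ i, (2 * w i + 1) := by
  classical
  have hmaps : Set.MapsTo b.equivFun s (Finset.Icc (fun i => -(w i : ℤ)) fun i => (w i : ℤ)) := by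
    intro x hx
    have hcoord : ∀ i, |b.equivFun x i| ≤ w i := fun i => by
      rw [Int.abs_eq_natAbs]
      exact_mod_cast h x hx i
    exact Finset.mem_coe.2 <| Finset.mem_Icc.2
      ⟨fun i => (abs_le.1 (hcoord i)).1, fun i => (abs_le.1 (hcoord i)).2⟩
  refine (Finset.card_le_card_of_injOn _ hmaps b.equivFun.injective.injOn).trans_eq ?_
  rw [Pi.card_Icc]
  refine Finset.prod_congr rfl fun i _ => ?_
  rw [Int.card_Icc]
  omega

theorem card_le_card_ker_mul_card_image {A B : Type*} [AddGroup A] [AddGroup B] [DecidableEq B]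
    (f : A →+ B) [Finite f.ker] (s : Finset A) :
    s.card ≤ Nat.card f.ker * (s.image f).card := by
  refine Finset.card_le_mul_card_image s _ fun c hc => ?_
  obtain ⟨a, -, rfl⟩ := Finset.mem_image.1 hc
  have : Finite (f ⁻¹' {f a}) := .of_equiv _ (f.fiberEquivKer a).symm
  calc (s.filter fun x => f x = f a).card
      = (s.filter fun x => f x = f a : Set A).ncard := by rw [Set.ncard_coe_finset]
    _ ≤ (f ⁻¹' {f a}).ncard := Set.ncard_le_ncard fun x hx => (Finset.mem_filter.1 hx).2
    _ = Nat.card f.ker := Nat.card_congr (f.fiberEquivKer a)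

-- Peeling off one factor `x ^ m - x ^ r` at a time turns the hypothesis into `b` nested
-- recurrences, each of which costs one degree.
theorem polynomiallyBounded_norm_pow_mul {R E : Type*} [CommRing R] [SeminormedAddCommGroup E]
    (ℓ : R →+ E) {x y : R} {r m b : ℕ} (hrm : r < m) (h : (x ^ m - x ^ r) ^ b * y = 0) :
    PolynomiallyBounded fun j => ‖ℓ (x ^ j * y)‖ := by
  induction b generalizing y with
  | zero =>
    obtain rfl : y = 0 := by simpa only [pow_zero, one_mul] using h
    simpa only [mul_zero, map_zero, norm_zero] using PolynomiallyBounded.const 0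
  | succ b ih =>
    have hstep := ih (y := (x ^ m - x ^ r) * y) (by rw [← mul_assoc, ← pow_succ, h])
    refine PolynomiallyBounded.of_recurrence hrm hstep fun j => ?_
    have hsplit : x ^ (j + m) * y = x ^ (j + r) * y + x ^ j * ((x ^ m - x ^ r) * y) := by ring
    rw [hsplit, map_add]
    exact norm_add_le _ _

theorem polynomiallyBounded_card_subsetSums_of_free {N : Type*} [CommRing N] [DecidableEq N]
    [Module.Free ℤ N] [Module.Finite ℤ N] {x : N} {r m b : ℕ} (hrm : r < m)
    (h : (x ^ m - x ^ r) ^ b = 0) :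
    PolynomiallyBounded fun n => ((subsetSums (fun j => x ^ j) (n + 1)).card : ℝ) := by
  let B := Module.Free.chooseBasis ℤ N
  let w i n := ∑ j ∈ Finset.range (n + 1), (B.coord i (x ^ j)).natAbs
  have hw : ∀ i, PolynomiallyBounded fun n => (w i n : ℝ) := fun i => by
    have hcoord := polynomiallyBounded_norm_pow_mul (B.coord i).toAddMonoidHom hrm (y := 1)
      (by rw [h, zero_mul])
    refine hcoord.sum_range.mono fun n => ?_
    simp [w, Nat.cast_natAbs, Int.norm_eq_abs]
  have hcard : ∀ n, (subsetSums (fun j => x ^ j) (n + 1)).card ≤ ∏ i, (2 * w i n + 1) := fun n =>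
    card_le_prod_of_natAbs_coord_le B fun y hy i =>
      natAbs_le_sum_range_of_mem_subsetSums (B.coord i).toAddMonoidHom hy
  have hprod : PolynomiallyBounded fun n => ∏ i, (2 * (w i n : ℝ) + 1) :=
    .prod (fun i _ => ((PolynomiallyBounded.const 2).mul (hw i) fun n => by positivity).add
      (.const 1)) fun i _ n => by positivity
  exact hprod.mono fun n => by exact_mod_cast hcard n

theorem exists_pow_succ_sub_self_pow_eq_zero {N : Type*} [CommRing N] [Module.Free ℤ N]
    [Module.Finite ℤ N] {x : N}
    (h : ∀ z : ℂ, (∀ q : ℤ[X], aeval x q = 0 → aeval z q = 0) → ‖z‖ ≤ 1) :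
    ∃ K b : ℕ, 0 < K ∧ (x ^ (K + 1) - x) ^ b = 0 := by
  classical
  let A := Algebra.leftMulMatrix (Module.Free.chooseBasis ℤ N) x
  have hA : ∀ q : ℤ[X], aeval A q = 0 ↔ aeval x q = 0 := fun q => by
    rw [aeval_algHom_apply, map_eq_zero_iff _ (Algebra.leftMulMatrix_injective _)]
  have hroot : ∀ z : ℂ, aeval z A.charpoly = 0 → ‖z‖ ≤ 1 := fun z hz =>
    h z fun q hq => aeval_eq_zero_of_aeval_charpoly_eq_zero ((hA q).2 hq) hz
  obtain ⟨K, hK, hpow⟩ :=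
    exists_pow_succ_eq_self_of_norm_root_le_one A.charpoly_monic hroot
  have hdvd : A.charpoly ∣ (X ^ (K + 1) - X) ^ A.charpoly.natDegree :=
    dvd_pow_natDegree_of_forall_root A.charpoly_monic fun z hz => by simp [hpow z hz]
  refine ⟨K, A.charpoly.natDegree, hK, ?_⟩
  have hzero := aeval_eq_zero_of_dvd_aeval_eq_zero hdvd ((hA _).1 A.aeval_self_charpoly)
  simpa only [map_pow, map_sub, aeval_X] using hzero

theorem norm_le_one_of_not_injective_sum_pow_pow {R : Type*} [Ring R] {x : R}
    (h : ∀ k, 0 < k → ¬ Function.Injective fun S : Finset ℕ => ∑ i ∈ S, (x ^ k) ^ i) {z : ℂ}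
    (hz : ∀ q : ℤ[X], aeval x q = 0 → aeval z q = 0) : ‖z‖ ≤ 1 := by
  by_contra! hnorm
  obtain ⟨k, hk⟩ := pow_unbounded_of_one_lt 2 hnorm
  have hk₀ : 0 < k := Nat.pos_of_ne_zero fun hk₀ => by norm_num [hk₀] at hk
  obtain ⟨p, hp, hcoeff, hroot⟩ := exists_aeval_eq_zero_of_not_injective_sum_pow (h k hk₀)
  have hroot' : aeval (z ^ k) p = 0 := by
    rw [← expand_aeval]
    exact hz _ (by rw [expand_aeval, hroot])
  have hlt := norm_lt_two_of_abs_coeff_le_one hp hcoeff hroot'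
  rw [norm_pow] at hlt
  exact hlt.not_gt hk

instance isTorsionFree_quotient_torsion' (R : Type*) [CommRing R] :
    Module.IsTorsionFree ℤ (R ⧸ Submodule.torsion' R R ℤ⁰) := by
  refine .of_smul_eq_zero fun c y hcy => or_iff_not_imp_left.2 fun hc => ?_
  obtain ⟨y, rfl⟩ := Ideal.Quotient.mk_surjective y
  rw [← map_zsmul, Ideal.Quotient.eq_zero_iff_mem] at hcy
  obtain ⟨d, hd⟩ := hcy
  exact Ideal.Quotient.eq_zero_iff_mem.2
    ⟨d * ⟨c, mem_nonZeroDivisors_of_ne_zero hc⟩, by rw [mul_smul]; exact hd⟩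

theorem finite_torsion' (R : Type*) [CommRing R] [Module.Finite ℤ R] :
    Finite (Submodule.torsion' R R ℤ⁰) := by
  let T := Submodule.torsion' R R ℤ⁰
  have : Module.Finite ℤ T :=
    .of_injective (T.subtype.restrictScalars ℤ) Subtype.val_injective
  have htorsion : Module.IsTorsion ℤ T := by
    rintro ⟨y, c, hc⟩
    exact ⟨c, Subtype.ext hc⟩
  exact Module.finite_of_fg_torsion T htorsion

theorem polynomiallyBounded_card_subsetSums {R : Type*} [CommRing R] [DecidableEq R]
    [Module.Finite ℤ R] {x : R}
    (h : ∀ k, 0 < k → ¬ Function.Injective fun S : Finset ℕ => ∑ i ∈ S, (x ^ k) ^ i) :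
    PolynomiallyBounded fun n => ((subsetSums (fun j => x ^ j) (n + 1)).card : ℝ) := by
  classical
  let T : Ideal R := Submodule.torsion' R R ℤ⁰
  let f : R →+* R ⧸ T := Ideal.Quotient.mk T
  have hnorm : ∀ z : ℂ, (∀ q : ℤ[X], aeval (f x) q = 0 → aeval z q = 0) → ‖z‖ ≤ 1 :=
    fun z hz => norm_le_one_of_not_injective_sum_pow_pow h fun q hq => hz q <| by
      rw [← f.toIntAlgHom_apply, aeval_algHom_apply, hq, map_zero]
  obtain ⟨K, b, hK, hzero⟩ := exists_pow_succ_sub_self_pow_eq_zero hnorm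
  have hfree : PolynomiallyBounded fun n => ((subsetSums (fun j => f x ^ j) (n + 1)).card : ℝ) :=
    polynomiallyBounded_card_subsetSums_of_free (r := 1) (m := K + 1) (by omega)
      (by rwa [pow_one (f x)])
  have : Finite f.toAddMonoidHom.ker := by
    have hker : f.toAddMonoidHom.ker = T.toAddSubgroup :=
      AddSubgroup.ext fun y => Ideal.Quotient.eq_zero_iff_mem
    rw [hker]
    exact finite_torsion' R
  refine ((PolynomiallyBounded.const (Nat.card f.toAddMonoidHom.ker)).mul hfree
    fun n => by positivity).mono fun n => ?_
  have hcard := card_le_card_ker_mul_card_image f.toAddMonoidHom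
    (subsetSums (fun j => x ^ j) (n + 1))
  rw [image_subsetSums] at hcard
  simp only [RingHom.toAddMonoidHom_eq_coe, AddMonoidHom.coe_coe, map_pow] at hcard ⊢
  exact_mod_cast hcard

theorem two_pow_le_card_subsetSums {R : Type*} [Semiring R] [DecidableEq R] {x : R} {k : ℕ}
    (hk : 0 < k) (h : Function.Injective fun S : Finset ℕ => ∑ i ∈ S, (x ^ k) ^ i) (n : ℕ) :
    2 ^ (n / k + 1) ≤ (subsetSums (fun j => x ^ j) (n + 1)).card := by
  have hmem : ∀ S ∈ (Finset.range (n / k + 1)).powerset,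
      ∑ i ∈ S, (x ^ k) ^ i ∈ subsetSums (fun j => x ^ j) (n + 1) := fun S hS => by
    refine Finset.mem_image.2 ⟨S.image (k * ·), ?_, ?_⟩
    · refine Finset.mem_powerset.2 <| Finset.image_subset_iff.2 fun i hi => ?_
      have hi' := Finset.mem_range_succ_iff.1 (Finset.mem_powerset.1 hS hi)
      exact Finset.mem_range_succ_iff.2 <| (Nat.mul_le_mul_left k hi').trans (Nat.mul_div_le n k)
    · rw [Finset.sum_image fun i _ j _ hij => Nat.eq_of_mul_eq_mul_left hk hij]
      simp only [pow_mul]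
  simpa only [Finset.card_powerset, Finset.card_range] using
    Finset.card_le_card_of_injOn _ hmem h.injOn

theorem isIntegral_of_not_injective_sum_pow {R : Type*} [Ring R] {x : R}
    (h : ¬ Function.Injective fun S : Finset ℕ => ∑ i ∈ S, x ^ i) : IsIntegral ℤ x := by
  obtain ⟨p, hp, hcoeff, hroot⟩ := exists_aeval_eq_zero_of_not_injective_sum_pow h
  have hunit := isUnit_leadingCoeff_of_abs_coeff_le_one hp hcoeff
  refine ⟨C (↑hunit.unit⁻¹ : ℤ) * p, ?_, ?_⟩
  · exact monic_C_mul_of_mul_leadingCoeff_eq_one hunit.val_inv_mul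
  · rw [← aeval_def, map_mul, hroot, mul_zero]

theorem polynomiallyBounded_or_exponentiallyGrowing_card_subsetSums {R : Type*} [CommRing R]
    [DecidableEq R] (x : R) :
    (PolynomiallyBounded fun n => ((subsetSums (fun j => x ^ j) (n + 1)).card : ℝ)) ∨
      ExponentiallyGrowing fun n => ((subsetSums (fun j => x ^ j) (n + 1)).card : ℝ) := by
  by_cases h : ∀ k, 0 < k → ¬ Function.Injective fun S : Finset ℕ => ∑ i ∈ S, (x ^ k) ^ i
  · left
    have hint : IsIntegral ℤ x := isIntegral_of_not_injective_sum_pow <| by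
      simpa only [pow_one] using h 1 one_pos
    let A := Algebra.adjoin ℤ {x}
    let y : A := ⟨x, Algebra.self_mem_adjoin_singleton ℤ x⟩
    have : Module.Finite ℤ A := .of_fg hint.fg_adjoin_singleton
    have hy : ∀ k, 0 < k → ¬ Function.Injective fun S : Finset ℕ => ∑ i ∈ S, (y ^ k) ^ i :=
      fun k hk hinj => h k hk fun S S' hSS' => hinj <| Subtype.ext <| by
        simpa [y] using hSS'
    refine (polynomiallyBounded_card_subsetSums hy).mono fun n => ?_
    have himage := image_subsetSums A.val.toAddMonoidHom (fun j => y ^ j) (n + 1)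
    have hpow : (fun j => A.val.toAddMonoidHom (y ^ j)) = fun j => x ^ j := rfl
    rw [← hpow, ← himage]
    exact_mod_cast Finset.card_image_le
  · right
    push Not at h
    obtain ⟨k, hk, hinj⟩ := h
    exact .of_two_pow_le hk fun n => by exact_mod_cast two_pow_le_card_subsetSums hk hinj n

end SubsetSums

section CyclicModules

open Polynomial

theorem exists_injective_map_pow_eq_pow_apply {M : Type*} [AddCommGroup M] (Φ : Module.End ℤ M)
    (u : M) : ∃ I : Ideal ℤ[X], ∃ e : ℤ[X] ⧸ I →+ M, Function.Injective e ∧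
      ∀ j : ℕ, e (Ideal.Quotient.mk I X ^ j) = (Φ ^ j) u := by
  let w := Module.AEval'.of Φ u
  let e := Ideal.quotTorsionOfEquivSpanSingleton ℤ[X] (Module.AEval' Φ) w
  let unof := (Module.AEval'.of Φ).symm
  refine ⟨_, unof.toAddMonoidHom.comp ((Submodule.subtype (Submodule.span ℤ[X] {w})).comp
    e.toLinearMap).toAddMonoidHom, ?_, fun j => ?_⟩
  · exact unof.injective.comp (Subtype.val_injective.comp e.injective)
  · have he : e (Ideal.Quotient.mk _ X ^ j) = (X : ℤ[X]) ^ j •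
        (⟨w, Submodule.mem_span_singleton_self w⟩ : Submodule.span ℤ[X] {w}) := by
      rw [← map_pow]
      exact Ideal.quotTorsionOfEquivSpanSingleton_apply_mk w _
    calc unof (e (Ideal.Quotient.mk _ X ^ j)).1
        = unof ((X : ℤ[X]) ^ j • Module.AEval'.of Φ u) := by rw [he]; rfl
      _ = (Φ ^ j) u := by rw [Module.AEval'.X_pow_smul_of, LinearEquiv.symm_apply_apply]; rfl

end CyclicModules

section Trajectories

theorem Tn_succ {G : Type*} [Group G] [DecidableEq G] (φ : G → G) (F : Finset G) (n : ℕ) :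
    Tn φ F (n + 1) = Tn φ F n * F.image φ^[n + 1] := by
  rw [Tn]
  congr!

theorem Tn_mono {G : Type*} [Group G] (φ : G → G) {F F' : Finset G} (h : F ⊆ F') (n : ℕ) :
    Tn φ F n ⊆ Tn φ F' n := by
  classical
  induction n with
  | zero => exact h
  | succ n ih =>
    rw [Tn_succ, Tn_succ]
    exact Finset.mul_subset_mul ih (Finset.image_subset_image h)

theorem card_Tn_singleton {G : Type*} [Group G] (φ : G → G) (v : G) (n : ℕ) :
    (Tn φ {v} n).card = 1 := by
  classical
  induction n with
  | zero => exact Finset.card_singleton v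
  | succ n ih => rw [Tn_succ, Finset.image_singleton, Finset.card_mul_singleton, ih]

variable {G : Type*} [CommGroup G] [DecidableEq G] (φ : G →* G)

theorem Tn_mul (F F' : Finset G) (n : ℕ) : Tn φ (F * F') n = Tn φ F n * Tn φ F' n := by
  induction n with
  | zero => rfl
  | succ n ih =>
    have himage : (F * F').image φ^[n + 1] = F.image φ^[n + 1] * F'.image φ^[n + 1] :=
      Finset.image_image₂_distrib (iterate_map_mul φ (n + 1))
    rw [Tn_succ, Tn_succ, Tn_succ, ih, himage, mul_mul_mul_comm]

theorem card_Tn_smul (v : G) (F : Finset G) (n : ℕ) :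
    (Tn φ (v • F) n).card = (Tn φ F n).card := by
  obtain ⟨w, hw⟩ := Finset.card_eq_one.1 (card_Tn_singleton φ v n)
  rw [← Finset.singleton_mul, Tn_mul, hw, Finset.card_singleton_mul]

theorem card_Tn_prod_le {ι : Type*} (s : Finset ι) (F : ι → Finset G) (n : ℕ) :
    (Tn φ (∏ i ∈ s, F i) n).card ≤ ∏ i ∈ s, (Tn φ (F i) n).card := by
  classical
  induction s using Finset.induction_on with
  | empty => exact (card_Tn_singleton φ 1 n).le
  | insert i s hi ih =>
    rw [Finset.prod_insert hi, Finset.prod_insert hi, Tn_mul]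
    exact Finset.card_mul_le.trans (Nat.mul_le_mul_left _ ih)

theorem subset_prod_pair_one (F : Finset G) : F ⊆ ∏ u ∈ F, {1, u} := fun u hu => by
  rw [← Finset.mem_coe, Finset.coe_prod, Set.mem_finsetProd]
  refine ⟨fun w => if w = u then w else 1, fun {w} _ => ?_, ?_⟩
  · by_cases hw : w = u <;> simp [hw]
  · simp [Finset.prod_ite_eq', hu]

theorem Tn_pair_one (u : G) (n : ℕ) :
    Tn φ {1, u} n = (Finset.range (n + 1)).powerset.image fun S => ∏ j ∈ S, φ^[j] u := by
  induction n with
  | zero =>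
    rw [Finset.range_add_one, Finset.range_zero, Finset.powerset_insert, Finset.powerset_empty]
    simp [Tn, Finset.pair_comm]
  | succ n ih =>
    have himage : ({1, u} : Finset G).image φ^[n + 1] = {1} ∪ {φ^[n + 1] u} := by
      rw [Finset.image_insert, Finset.image_singleton, iterate_map_one, Finset.insert_eq]
    rw [Tn_succ, himage, Finset.mul_union, Finset.singleton_one, mul_one, mul_comm,
      Finset.singleton_mul, ih, Finset.range_add_one (n := n + 1), Finset.powerset_insert,
      Finset.image_union, Finset.image_image, Finset.smul_finset_def, Finset.image_image]
    congr 1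
    refine Finset.image_congr fun S hS => ?_
    have hn : n + 1 ∉ S := fun hmem =>
      Finset.notMem_range_self (Finset.mem_powerset.1 (Finset.mem_coe.1 hS) hmem)
    simp only [Function.comp_apply, Finset.prod_insert hn, smul_eq_mul]

theorem polynomiallyBounded_or_exponentiallyGrowing_card_Tn_pair_one (u : G) :
    (PolynomiallyBounded fun n => ((Tn φ {1, u} n).card : ℝ)) ∨
      ExponentiallyGrowing fun n => ((Tn φ {1, u} n).card : ℝ) := by
  classical
  let Φ : Module.End ℤ (Additive G) := (MonoidHom.toAdditive φ).toIntLinearMap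
  obtain ⟨I, e, he, hpow⟩ := exists_injective_map_pow_eq_pow_apply Φ (Additive.ofMul u)
  have hΦ : ∀ j, (Φ ^ j) (Additive.ofMul u) = Additive.ofMul (φ^[j] u) := fun j => by
    rw [Module.End.coe_pow]
    exact (Function.Semiconj.iterate_right (f := Additive.ofMul) (ga := φ) (fun _ => rfl) j u).symm
  have hcard : ∀ n, (Tn φ {1, u} n).card =
      (subsetSums (fun j => Ideal.Quotient.mk I Polynomial.X ^ j) (n + 1)).card := fun n => by
    rw [← Finset.card_image_of_injective _ he, image_subsetSums, Tn_pair_one]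
    simp only [hpow, hΦ]
    rfl
  simp only [hcard]
  exact polynomiallyBounded_or_exponentiallyGrowing_card_subsetSums _

theorem polynomiallyBounded_card_Tn {F : Finset G}
    (h : ∀ u ∈ F, PolynomiallyBounded fun n => ((Tn φ {1, u} n).card : ℝ)) :
    PolynomiallyBounded fun n => ((Tn φ F n).card : ℝ) := by
  refine (PolynomiallyBounded.prod h fun u _ n => by positivity).mono fun n => ?_
  have hcard := (Finset.card_le_card (Tn_mono φ (subset_prod_pair_one F) n)).trans
    (card_Tn_prod_le φ F _ n)
  exact_mod_cast hcard

end Trajectories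

theorem polynomiallyBounded_or_exponentiallyGrowing_card_Tn_of_one_mem {G : Type*}
    [CommGroup G] (φ : G →* G) {F : Finset G} (hF : 1 ∈ F) :
    (PolynomiallyBounded fun n => ((Tn φ F n).card : ℝ)) ∨
      ExponentiallyGrowing fun n => ((Tn φ F n).card : ℝ) := by
  classical
  by_cases h : ∀ u ∈ F, PolynomiallyBounded fun n => ((Tn φ {1, u} n).card : ℝ)
  · exact .inl (polynomiallyBounded_card_Tn φ h)
  · push Not at h
    obtain ⟨u, hu, hpoly⟩ := h
    have hpair : {1, u} ⊆ F := Finset.insert_subset hF (Finset.singleton_subset_iff.2 hu)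
    have hexp := (polynomiallyBounded_or_exponentiallyGrowing_card_Tn_pair_one φ u).resolve_left
      hpoly
    exact .inr <| hexp.mono fun n => Nat.cast_le.2 <| Finset.card_le_card (Tn_mono φ hpair n)

theorem statement_17_general {G : Type*} [CommGroup G] (φ : G →* G) (F : Finset G) :
    (PolynomiallyBounded fun n => ((Tn φ F n).card : ℝ)) ∨
      ExponentiallyGrowing fun n => ((Tn φ F n).card : ℝ) := by
  classical
  rcases F.eq_empty_or_nonempty with rfl | ⟨v, hv⟩
  · exact .inl <| polynomiallyBounded_card_Tn φ (by simp)
  · have hone : 1 ∈ v⁻¹ • F := by simpa using Finset.smul_mem_smul_finset (a := v⁻¹) hv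
    simpa only [card_Tn_smul] using
      polynomiallyBounded_or_exponentiallyGrowing_card_Tn_of_one_mem φ hone

/-- **Dichotomy Theorem for growth.** Let `G` be an abelian group,
`φ : G → G` an endomorphism, and `F` a nonempty finite subset of `G` generating `G` as a
group together with all its forward images `φⁿ(F)`. Then the growth function
`γ_{φ,F}(n) = |T_n(φ,F)|` is either polynomial or exponential; there is no intermediate
growth. -/
theorem statement_17 {G : Type*} [CommGroup G] (φ : G → G)
    (hφ : ∀ x y : G, φ (x * y) = φ x * φ y)
    (F : Finset G) (hF : F.Nonempty)
    (hgen : Subgroup.closure (⋃ k : ℕ, φ^[k] '' (F : Set G)) = ⊤) :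
    (∃ d : ℕ, ∃ C : ℝ, 0 < C ∧
        ∀ n : ℕ, ((Tn φ F n).card : ℝ) ≤ C * ((n : ℝ) + 1) ^ d)
    ∨ (∃ b : ℝ, 1 < b ∧ ∃ n₀ : ℕ, ∀ n : ℕ, n₀ ≤ n →
        b ^ (n + 1) ≤ ((Tn φ F n).card : ℝ)) :=
  statement_17_general (MonoidHom.mk' φ hφ) F
end

section
/- (Dichotomy Theorem for the adjoint algebraic entropy) Let G be an abelian group and φ : G → G an endomorphism. Then either ent*(φ) = 0 or ent*(φ) = ∞; no finite positive value is attained. -/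
open scoped ENNReal

/-- The `n`-th cotrajectory of a subgroup `N` under `φ`
(`Cn φ N n = C_{n+1}(φ,N) = N ∩ φ⁻¹(N) ∩ … ∩ φ⁻ⁿ(N)`). -/
def Cn {G : Type*} [Group G] (φ : G →* G) (N : Subgroup G) : ℕ → Subgroup G
  | 0 => N
  | n + 1 => N ⊓ Subgroup.comap φ (Cn φ N n)

/-- `H*(φ,N) = lim_n (log [G : C_n(φ,N)])/n` (the limit exists, and equals the
`limsup`). -/
noncomputable def Hstar {G : Type*} [Group G] (φ : G →* G) (N : Subgroup G) : ℝ :=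
  Filter.limsup
    (fun n : ℕ => Real.log ((Cn φ N n).index : ℝ) / ((n : ℝ) + 1)) Filter.atTop

/-- The adjoint algebraic entropy
`ent*(φ) = sup {H*(φ,N) : N a finite-index subgroup of G} ∈ [0,∞]`. -/
noncomputable def entStar {G : Type*} [Group G] (φ : G →* G) : ℝ≥0∞ :=
  ⨆ N : Subgroup G, ⨆ _ : N.FiniteIndex, ENNReal.ofReal (Hstar φ N)

open Filter Polynomial Topology

/-!
Write `G` additively. If for every prime `p` the endomorphism of `G ⧸ pG` induced by `φ` is
algebraic over `𝔽_p`, then multiplying monic integral lifts of the annihilating polynomials gives,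
for every `m ≠ 0`, a monic `Q ∈ ℤ[X]` with `Q(φ) G ⊆ mG`. For `m = [G : N]` this lies in `N`, so
the first `deg Q` iterates of a point decide whether its whole orbit stays in `N`, the
cotrajectories of `N` are eventually constant, and `H*(φ, N) = 0`.

Otherwise, for some `p`, the induced endomorphism `ψ` of `V = G ⧸ pG` is transcendental. Then
every `q(ψ)` with `q ≠ 0` has infinite-dimensional range, and since `𝔽_p[X]` is countable there
are, for each `k`, functionals `f₁, …, f_k` on `V` that are linearly independent over `𝔽_p[X]`.
The common kernel `N` of the `f_j` in `G` has cotrajectories of the largest possible index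
`p ^ (k * n)`, so `H*(φ, N) = k log p`, which is unbounded in `k`.
-/

section LinearAlgebra

theorem exists_linearIndepOn_forall_inter_nonempty {K V : Type*} [DivisionRing K] [AddCommGroup V]
    [Module K V] {W : ℕ → Submodule K V}
    (hW : ∀ n, ¬ FiniteDimensional K (W n)) :
    ∃ s : Set V, LinearIndepOn K id s ∧ ∀ n, (s ∩ W n).Nonempty := by
  classical
  have exists_notMem_span (n : ℕ) (t : Finset V) :
      ∃ y ∈ W n, y ∉ Submodule.span K (t : Set V) := by
    by_contra! hle
    exact hW n (Submodule.finiteDimensional_of_le (S₂ := Submodule.span K (t : Set V)) hle)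
  choose y hyW hy using exists_notMem_span
  obtain ⟨t, ht_zero, ht_succ⟩ : ∃ t : ℕ → Finset V,
      t 0 = ∅ ∧ ∀ n, t (n + 1) = insert (y n (t n)) (t n) :=
    ⟨Nat.rec ∅ fun n u => insert (y n u) u, rfl, fun _ => rfl⟩
  have ht_mono : Monotone t :=
    monotone_nat_of_le_succ fun n => ht_succ n ▸ Finset.subset_insert _ _
  have ht_indep (n : ℕ) : LinearIndepOn K id (t n : Set V) := by
    induction n with
    | zero => simp [ht_zero]
    | succ n ih => rw [ht_succ, Finset.coe_insert]; exact ih.id_insert (hy n _)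
  have ht_directed : Directed (· ⊆ ·) fun n => (t n : Set V) :=
    Monotone.directed_le fun m n hmn => Finset.coe_subset.2 (ht_mono hmn)
  refine ⟨⋃ n, (t n : Set V), linearIndepOn_iUnion_of_directed ht_directed ht_indep, fun n =>
    ⟨y n (t n), Set.mem_iUnion.2 ⟨n + 1, ?_⟩, hyW n _⟩⟩
  rw [ht_succ]
  exact Finset.mem_insert_self _ _

variable {K V ι : Type*} [Field K] [AddCommGroup V] [Module K V]

theorem exists_dual_forall_not_le_ker [Countable ι] {W : ι → Submodule K V}
    (hW : ∀ i, ¬ FiniteDimensional K (W i)) :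
    ∃ F : Module.Dual K V, ∀ i, ¬ W i ≤ LinearMap.ker F := by
  cases isEmpty_or_nonempty ι
  · exact ⟨0, isEmptyElim⟩
  obtain ⟨e, he⟩ := exists_surjective_nat ι
  obtain ⟨s, hs, hsW⟩ := exists_linearIndepOn_forall_inter_nonempty fun n => hW (e n)
  obtain ⟨F, hF⟩ := Module.exists_dual_forall_apply_eq_one hs
  refine ⟨F, he.forall.2 fun n hle => ?_⟩
  obtain ⟨x, hxs, hxW⟩ := hsW n
  exact one_ne_zero ((hF x hxs).symm.trans (hle hxW))

theorem surjective_pi_of_linearIndependent [Finite ι] {f : ι → Module.Dual K V}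
    (hf : LinearIndependent K f) : Function.Surjective (LinearMap.pi f) := by
  classical
  cases nonempty_fintype ι
  rw [← LinearMap.dualMap_injective_iff, injective_iff_map_eq_zero]
  intro c hc
  have hsum : ∑ i, c (Pi.single i 1) • f i = 0 := by
    ext v
    have hv : c (fun i => f i v) = 0 := LinearMap.congr_fun hc v
    rw [pi_eq_sum_univ' fun i => f i v] at hv
    simpa [mul_comm] using hv
  have hzero := Fintype.linearIndependent_iff.1 hf _ hsum
  exact LinearMap.pi_ext' fun i => LinearMap.ext_ring (hzero i)

end LinearAlgebra

section Polynomial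

theorem map_aeval_apply_of_semiconj {R S M N : Type*} [CommSemiring R] [CommSemiring S]
    [Algebra R S] [AddCommMonoid M] [Module R M] [AddCommMonoid N] [Module R N] [Module S N]
    [IsScalarTower R S N]
    {f : M →ₗ[R] N} {a : Module.End R M} {b : Module.End S N} (h : Function.Semiconj f a b)
    (q : R[X]) (x : M) : f (aeval a q x) = aeval b q (f x) := by
  have hpow (i : ℕ) : f ((a ^ i) x) = (b ^ i) (f x) := by
    simpa only [Module.End.pow_apply] using h.iterate_right i x
  simp only [aeval_eq_sum_range, LinearMap.sum_apply, LinearMap.smul_apply, map_sum, map_smul, hpow]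

theorem pow_apply_mem_of_range_aeval_le {R M : Type*} [CommRing R] [Nontrivial R]
    [AddCommGroup M] [Module R M] {a : Module.End R M} {Q : R[X]} (hQ : Q.Monic)
    {N : Submodule R M} (hN : LinearMap.range (aeval a Q) ≤ N) {x : M}
    (hx : ∀ i < Q.natDegree, (a ^ i) x ∈ N) (n : ℕ) : (a ^ n) x ∈ N := by
  have hpow : (a ^ n) x = aeval a (X ^ n %ₘ Q) x + aeval a Q (aeval a (X ^ n /ₘ Q) x) := by
    rw [← Module.End.mul_apply, ← map_mul, ← LinearMap.add_apply, ← map_add, modByMonic_add_div,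
      aeval_X_pow]
  have hrem : aeval a (X ^ n %ₘ Q) x ∈ N := by
    rw [aeval_def, eval₂_eq_sum, Polynomial.sum, LinearMap.sum_apply]
    refine N.sum_mem fun i hi => N.smul_mem _ (hx i ?_)
    exact coe_lt_degree.1 ((le_degree_of_mem_supp i hi).trans_lt (degree_modByMonic_lt _ hQ))
  rw [hpow]
  exact N.add_mem hrem (hN ⟨_, rfl⟩)

variable {K V ι : Type*} [Field K] [AddCommGroup V] [Module K V] {ψ : Module.End K V}

theorem not_finiteDimensional_range_aeval (hψ : Transcendental K ψ) {q : K[X]} (hq : q ≠ 0) :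
    ¬ FiniteDimensional K (LinearMap.range (aeval ψ q)) := by
  intro hfin
  have hcomm (r : K[X]) (v : V) : aeval ψ r (aeval ψ q v) = aeval ψ q (aeval ψ r v) := by
    simp only [← Module.End.mul_apply, ← map_mul, mul_comm]
  have hinv : ∀ x ∈ LinearMap.range (aeval ψ q), ψ x ∈ LinearMap.range (aeval ψ q) := by
    rintro _ ⟨v, rfl⟩
    exact ⟨ψ v, by simpa only [aeval_X] using (hcomm X v).symm⟩
  let ρ := ψ.restrict hinv
  have hρ : IsIntegral K ρ := Algebra.IsIntegral.isIntegral ρ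
  have hsemi : Function.Semiconj (LinearMap.range (aeval ψ q)).subtype ρ ψ := fun _ => rfl
  refine mul_ne_zero (minpoly.ne_zero hρ) hq (transcendental_iff.1 hψ _ ?_)
  ext v
  have hmin := map_aeval_apply_of_semiconj hsemi (minpoly K ρ) ⟨aeval ψ q v, v, rfl⟩
  simpa only [minpoly.aeval, LinearMap.zero_apply, map_zero, Submodule.subtype_apply, map_mul,
    Module.End.mul_apply] using hmin.symm

theorem exists_dual_sum_comp_aeval_ne_zero [Countable K] [Fintype ι] (hψ : Transcendental K ψ) :
    ∃ f : ι → Module.Dual K V, ∀ q : ι → K[X], q ≠ 0 → ∑ j, f j ∘ₗ aeval ψ (q j) ≠ 0 := by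
  classical
  have : Countable K[X] := by
    rw [← Cardinal.mk_le_aleph0_iff]
    exact cardinalMk_le_max.trans (max_le Cardinal.mk_le_aleph0 le_rfl)
  -- A generic functional `F` on `ι → V` works: its components satisfy a polynomial relation `q`
  -- only if `F` kills the range of `w q`, and only countably many `q` have to be avoided.
  let w (q : ι → K[X]) : V →ₗ[K] ι → V := LinearMap.pi fun j => aeval ψ (q j)
  have hw (q : {q : ι → K[X] // q ≠ 0}) : ¬ FiniteDimensional K (LinearMap.range (w q)) := by
    intro hfin
    obtain ⟨j, hj⟩ := Function.ne_iff.1 q.2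
    have hproj : LinearMap.range (aeval ψ (q.1 j)) =
        (LinearMap.range (w q)).map (LinearMap.proj j) := by
      rw [← LinearMap.range_comp, LinearMap.proj_pi]
    exact not_finiteDimensional_range_aeval hψ hj (hproj ▸ inferInstance)
  obtain ⟨F, hF⟩ := exists_dual_forall_not_le_ker hw
  refine ⟨fun j => F ∘ₗ LinearMap.single K (fun _ => V) j, fun q hq hsum => hF ⟨q, hq⟩ ?_⟩
  rintro _ ⟨v, rfl⟩
  have hv : ∑ j, F (Pi.single j (aeval ψ (q j) v)) = 0 := by
    simpa using LinearMap.congr_fun hsum v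
  rwa [← map_sum, LinearMap.sum_single_apply] at hv

theorem exists_linearMap_surjective_iterates [Countable K] [Finite ι] (hψ : Transcendental K ψ) :
    ∃ f : V →ₗ[K] ι → K, ∀ n, Function.Surjective fun v (i : Fin n) => f (ψ^[i] v) := by
  cases nonempty_fintype ι
  obtain ⟨f, hf⟩ := exists_dual_sum_comp_aeval_ne_zero (ι := ι) hψ
  refine ⟨LinearMap.pi f, fun n y => ?_⟩
  have hindep : LinearIndependent K fun ij : Fin n × ι => f ij.2 ∘ₗ ψ ^ (ij.1 : ℕ) := by
    refine Fintype.linearIndependent_iff.2 fun c hc => ?_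
    let q (j : ι) : K[X] := ∑ i : Fin n, monomial (i : ℕ) (c (i, j))
    have hq : q = 0 := by
      by_contra hne
      refine hf q hne (Eq.trans ?_ hc)
      rw [Fintype.sum_prod_type_right]
      refine Finset.sum_congr rfl fun j _ => ?_
      ext v
      simp [q, aeval_monomial]
    rintro ⟨i, j⟩
    simpa [q, finsetSum_coeff, coeff_monomial, Fin.val_inj] using
      congr_arg (coeff · i) (congr_fun hq j)
  obtain ⟨v, hv⟩ := surjective_pi_of_linearIndependent hindep fun ij => y ij.1 ij.2
  refine ⟨v, ?_⟩
  ext i j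
  simpa only [LinearMap.pi_apply, LinearMap.comp_apply, Module.End.pow_apply] using
    congr_fun hv (i, j)

end Polynomial

section Reduction

variable {A : Type*} [AddCommGroup A] (a : Module.End ℤ A)

/-- The endomorphism of `A ⧸ nA` induced by an endomorphism `a` of `A`. -/
noncomputable def endModN (n : ℕ) : Module.End (ZMod n) (ModN A n) :=
  AddMonoidHom.toZModLinearMap n <| LinearMap.toAddMonoidHom <|
    Submodule.mapQ (LinearMap.range (LinearMap.lsmul ℤ A n)) _ a <| by
      rintro _ ⟨y, rfl⟩
      exact ⟨a y, (map_zsmul a n y).symm⟩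

theorem semiconj_mkQ_endModN (n : ℕ) : Function.Semiconj (ModN.mkQ n) a (endModN a n) :=
  fun _ => rfl

variable {a}

theorem isIntegral_endModN_iff {n : ℕ} :
    IsIntegral ℤ (endModN a n) ↔ ∃ Q : ℤ[X], Q.Monic ∧
      LinearMap.range (aeval a Q) ≤ LinearMap.range (LinearMap.lsmul ℤ A n) := by
  refine exists_congr fun Q => and_congr_right fun _ => ?_
  have haeval (x : A) : ModN.mkQ n (aeval a Q x) = aeval (endModN a n) Q (ModN.mkQ n x) :=
    map_aeval_apply_of_semiconj (f := (ModN.mkQ n).toIntLinearMap) (semiconj_mkQ_endModN a n) Q x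
  have mkQ_surjective : Function.Surjective (ModN.mkQ n : A → ModN A n) :=
    Submodule.mkQ_surjective _
  have mkQ_eq_zero (x : A) : ModN.mkQ n x = 0 ↔ x ∈ LinearMap.range (LinearMap.lsmul ℤ A n) :=
    Submodule.Quotient.mk_eq_zero _
  simp only [← aeval_def, LinearMap.ext_iff, mkQ_surjective.forall, ← haeval, LinearMap.zero_apply,
    mkQ_eq_zero]
  exact Set.range_subset_iff.symm

theorem isIntegral_endModN_mul {m n : ℕ} (hm : IsIntegral ℤ (endModN a m))
    (hn : IsIntegral ℤ (endModN a n)) : IsIntegral ℤ (endModN a (m * n)) := by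
  rw [isIntegral_endModN_iff] at *
  obtain ⟨P, hP, hPm⟩ := hm
  obtain ⟨Q, hQ, hQn⟩ := hn
  refine ⟨P * Q, hP.mul hQ, ?_⟩
  rintro _ ⟨x, rfl⟩
  obtain ⟨y, hy⟩ := hQn ⟨x, rfl⟩
  obtain ⟨z, hz⟩ := hPm ⟨y, rfl⟩
  refine ⟨z, ?_⟩
  simp only [LinearMap.lsmul_apply] at hy hz ⊢
  rw [map_mul, Module.End.mul_apply, ← hy, map_zsmul, ← hz, smul_smul, Nat.cast_mul, mul_comm]

theorem isIntegral_endModN_of_isAlgebraic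
    (h : ∀ p : ℕ, ∀ [Fact p.Prime], IsAlgebraic (ZMod p) (endModN a p)) {n : ℕ} (hn : n ≠ 0) :
    IsIntegral ℤ (endModN a n) := by
  induction n using induction_on_primes with
  | zero => exact absurd rfl hn
  | one => exact isIntegral_endModN_iff.2 ⟨1, monic_one, fun x _ => ⟨x, one_zsmul x⟩⟩
  | prime_mul p n hp ih =>
    have : Fact p.Prime := ⟨hp⟩
    have : Algebra.IsIntegral ℤ (ZMod p) :=
      Algebra.IsIntegral.of_surjective (Algebra.ofId ℤ (ZMod p)) (ZMod.ringHom_surjective _)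
    exact isIntegral_endModN_mul (isIntegral_trans _ (h p).isIntegral)
      (ih (right_ne_zero_of_mul hn))

end Reduction

section Entropy

theorem mem_Cn {G : Type*} [Group G] {φ : G →* G} {N : Subgroup G} {n : ℕ} {x : G} :
    x ∈ Cn φ N n ↔ ∀ i ≤ n, φ^[i] x ∈ N := by
  induction n generalizing x with
  | zero => simp [Cn]
  | succ n ih =>
    simp only [Cn, Subgroup.mem_inf, Subgroup.mem_comap, ih, ← Function.iterate_succ_apply,
      ← Nat.lt_succ_iff, Nat.forall_lt_succ_left (n := n + 1), Function.iterate_zero, id]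

theorem Hstar_eq_zero_of_Cn_eventually_const {G : Type*} [Group G] {φ : G →* G} {N C : Subgroup G}
    (h : ∀ᶠ n in atTop, Cn φ N n = C) : Hstar φ N = 0 := by
  have hlim : Tendsto (fun n : ℕ => Real.log C.index / ((n : ℝ) + 1)) atTop (𝓝 0) :=
    (tendsto_atTop_add_const_right _ _ tendsto_natCast_atTop_atTop).const_div_atTop _
  exact (hlim.congr' (h.mono fun n hn => by rw [hn])).limsup_eq

-- For infinite `H` both sides are `0`, since then `Nat.card H = 0` and `Real.log 0 = 0`.
theorem Hstar_ker_of_surjective_iterates {G H : Type*} [Group G] [Group H] {φ : G →* G}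
    {f : G →* H} (hf : ∀ n, Function.Surjective fun x (i : Fin n) => f (φ^[i] x)) :
    Hstar φ f.ker = Real.log (Nat.card H) := by
  have hindex (n : ℕ) : (Cn φ f.ker n).index = Nat.card H ^ (n + 1) := by
    let F : G →* Fin (n + 1) → H :=
      MonoidHom.mk' (fun x i => f (φ^[i] x)) fun x y => by
        ext i
        simp only [iterate_map_mul, map_mul, Pi.mul_apply]
    have hker : Cn φ f.ker n = F.ker := by
      ext x
      simp only [mem_Cn, MonoidHom.mem_ker, F, MonoidHom.mk'_apply, funext_iff, Fin.forall_iff,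
        Nat.lt_succ_iff, Pi.one_apply]
    rw [hker, Subgroup.index_ker, MonoidHom.range_eq_top.2 (hf (n + 1)), Subgroup.card_top,
      Nat.card_fun, Nat.card_fin]
  have hconst (n : ℕ) : Real.log (Cn φ f.ker n).index / ((n : ℝ) + 1) = Real.log (Nat.card H) := by
    rw [hindex, Nat.cast_pow, Real.log_pow, Nat.cast_succ,
      mul_div_cancel_left₀ _ n.cast_add_one_ne_zero]
  simp only [Hstar, hconst, limsup_const]

variable {G : Type*} [CommGroup G] {φ : G →* G}

theorem Hstar_eq_zero_of_isIntegral {N : Subgroup G}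
    (h : IsIntegral ℤ (endModN φ.toAdditive.toIntLinearMap N.index)) : Hstar φ N = 0 := by
  set a : Module.End ℤ (Additive G) := φ.toAdditive.toIntLinearMap
  obtain ⟨Q, hQ, hQN⟩ := isIntegral_endModN_iff.1 h
  have hiter (i : ℕ) (x : G) : φ^[i] x ∈ N ↔
      (a ^ i) (Additive.ofMul x) ∈ N.toAddSubgroup.toIntSubmodule := by
    rw [Module.End.pow_apply]; rfl
  have hle : LinearMap.range (LinearMap.lsmul ℤ (Additive G) N.index) ≤
      N.toAddSubgroup.toIntSubmodule := by
    rintro _ ⟨x, rfl⟩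
    rw [LinearMap.lsmul_apply, Nat.cast_smul_eq_nsmul]
    exact N.pow_index_mem x.toMul
  refine Hstar_eq_zero_of_Cn_eventually_const (C := Cn φ N Q.natDegree) ?_
  filter_upwards [eventually_ge_atTop Q.natDegree] with n hn
  ext x
  simp only [mem_Cn, hiter]
  exact ⟨fun hx i hi => hx i (hi.trans hn), fun hx i _ =>
    pow_apply_mem_of_range_aeval_le hQ (hQN.trans hle) (fun j hj => hx j hj.le) i⟩

theorem exists_Hstar_eq_mul_log {p : ℕ} [Fact p.Prime]
    (h : Transcendental (ZMod p) (endModN φ.toAdditive.toIntLinearMap p)) (k : ℕ) :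
    ∃ N : Subgroup G, N.FiniteIndex ∧ Hstar φ N = k * Real.log p := by
  obtain ⟨g, hg⟩ := exists_linearMap_surjective_iterates (ι := Fin k) h
  let f : G →* Multiplicative (Fin k → ZMod p) :=
    AddMonoidHom.toMultiplicativeRight (g.toAddMonoidHom.comp (ModN.mkQ p))
  have hf (n : ℕ) : Function.Surjective fun x (i : Fin n) => f (φ^[i] x) := by
    intro y
    obtain ⟨v, hv⟩ := hg n y
    obtain ⟨x, rfl⟩ := Submodule.mkQ_surjective _ v
    refine ⟨x, funext fun i => ?_⟩
    exact (congr_arg g ((semiconj_mkQ_endModN _ p).iterate_right i x)).trans (congr_fun hv i)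
  refine ⟨f.ker, inferInstance, ?_⟩
  simp [Hstar_ker_of_surjective_iterates hf]

theorem entStar_eq_zero_of_isAlgebraic
    (h : ∀ p : ℕ, ∀ [Fact p.Prime], IsAlgebraic (ZMod p) (endModN φ.toAdditive.toIntLinearMap p)) :
    entStar φ = 0 := by
  simp only [entStar, ENNReal.iSup_eq_zero, ENNReal.ofReal_eq_zero]
  intro N hN
  exact (Hstar_eq_zero_of_isIntegral (isIntegral_endModN_of_isAlgebraic h hN.index_ne_zero)).le

theorem entStar_eq_top_of_transcendental {p : ℕ} [hp : Fact p.Prime]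
    (h : Transcendental (ZMod p) (endModN φ.toAdditive.toIntLinearMap p)) : entStar φ = ⊤ := by
  have hlog : 0 < Real.log p := Real.log_pos (Nat.one_lt_cast.2 hp.out.one_lt)
  refine ENNReal.eq_top_of_forall_nnreal_le fun r => ?_
  obtain ⟨k, hk⟩ := exists_nat_ge ((r : ℝ) / Real.log p)
  obtain ⟨N, hN, hNk⟩ := exists_Hstar_eq_mul_log h k
  calc (r : ℝ≥0∞) = ENNReal.ofReal r := ENNReal.ofReal_coe_nnreal.symm
    _ ≤ ENNReal.ofReal (Hstar φ N) :=
      ENNReal.ofReal_le_ofReal (hNk ▸ (div_le_iff₀ hlog).1 hk)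
    _ ≤ entStar φ := le_iSup₂_of_le N hN le_rfl

end Entropy

/-- **Dichotomy Theorem for the adjoint algebraic entropy.** For an
endomorphism `φ` of an abelian group `G`, either `ent*(φ) = 0` or `ent*(φ) = ∞`. -/
theorem statement_19 {G : Type*} [CommGroup G] (φ : G →* G) :
    entStar φ = 0 ∨ entStar φ = ⊤ := by
  by_cases h : ∀ p : ℕ, ∀ [Fact p.Prime],
      IsAlgebraic (ZMod p) (endModN φ.toAdditive.toIntLinearMap p)
  · exact Or.inl (entStar_eq_zero_of_isAlgebraic h)
  · push Not at h
    obtain ⟨p, hp, htrans⟩ := h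
    exact Or.inr (entStar_eq_top_of_transcendental htrans)
end
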